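/- arXiv:2605.20953 — 2 statements merged into one kernel-verified Lean document; each statement's English description precedes it below -/
import Mathlib

section
/- Let α = (√5 − 1)/2 be the golden mean and Sℓ(n) = Σ_{j=1}^{n} log(2 − 2cos(2πjα)). Then liminf_{n→∞} Sℓ(n)/log(n) = 0. -/
open Filter

/-!
Let `α = φ⁻¹`. The logarithm `L` of the double sine function with periods `1` and `α` satisfies
`L (x + α) = L x + log (2 sin (πx))` and `L (x + 1) = L x + log (2 sin (πx/α))`. Hence, if
`(N + 1)α = M + y` with `0 < y < 1`, the log-Sudler sums of `α` at `N` and of `α⁻¹ = α + 1` at `M`,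
the latter equal to the one of `α`, differ by `f y := L y - L α`. Now `L` is convex up to the centre
`(1 + α)/2` of its odd symmetry, and `f` vanishes at `2α - 1` and at `α`, so `f` is negative only
between these two zeros. When `y` falls there, the fractional part `z` of the next step lies
outside, `1 + α` times as far from one of the zeros, and convexity gives `f y + f z ≥ 0`. Therefore
the sums are bounded below. For `N` a Fibonacci number, `y - α` is exponentially small, so the sums
stay bounded above along the Fibonacci numbers.
-/

section

open Real Set MeasureTheory Asymptotics Topology goldenRatio

/-- Integrand of `logDoubleSine`, the logarithm of the double sine function with periods `a`
and `b`. -/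
noncomputable def doubleSineKernel (a b x t : ℝ) : ℝ :=
  (sinh ((a + b - 2 * x) * t) / (sinh (a * t) * sinh (b * t))
    - (a + b - 2 * x) / (a * b * t)) / (2 * t)

/-- The logarithm of Barnes' double sine function `Γ₂(x | a, b) / Γ₂(a + b - x | a, b)`, through
an integral representation valid for `0 < x < a + b`. -/
noncomputable def logDoubleSine (a b x : ℝ) : ℝ := ∫ t in Ioi 0, doubleSineKernel a b x t

lemma sinh_sub_self_isBigO : (fun x => sinh x - x) =O[𝓝 0] (· ^ 3) := by
  have hexp := exp_sub_sum_range_isBigO_pow 3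
  have hexp_neg := (hexp.comp_tendsto (continuous_neg.tendsto' (0 : ℝ) 0 neg_zero)).congr_right
    (g₂ := fun x => -(x ^ 3)) fun x => Odd.neg_pow (by decide) x
  refine ((hexp.sub hexp_neg.of_neg_right).const_mul_left (1 / 2)).congr_left fun x => ?_
  simp only [Function.comp_apply, sinh_eq, Finset.sum_range_succ, Nat.factorial]
  norm_num
  ring

lemma sinh_mul_sub_isBigO (c : ℝ) : (fun t => sinh (c * t) - c * t) =O[𝓝 0] (· ^ 3) := by
  have hc : Tendsto (c * ·) (𝓝 0) (𝓝 0) := (continuous_const_mul c).tendsto' 0 0 (mul_zero c)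
  refine (sinh_sub_self_isBigO.comp_tendsto hc).trans ?_
  exact ((isBigO_refl _ _).const_mul_left (c ^ 3)).congr_left fun t => (mul_pow c t 3).symm

lemma sinh_mul_isBigO_self (c : ℝ) : (fun t => sinh (c * t)) =O[𝓝 0] fun t => t := by
  have h : DifferentiableAt ℝ (fun t => sinh (c * t)) 0 := by fun_prop
  simpa using h.isBigO_sub

lemma exp_isBigO_sinh_atTop : exp =O[atTop] sinh := by
  refine .of_bound 4 ((eventually_ge_atTop 1).mono fun x hx => ?_)
  have hexp : x + 1 ≤ exp x := add_one_le_exp x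
  have hexp_neg : exp (-x) ≤ 1 := exp_le_one_iff.2 (by linarith)
  rw [norm_of_nonneg (exp_pos x).le, norm_of_nonneg (sinh_nonneg_iff.2 (by linarith)), sinh_eq]
  linarith

lemma sinh_le_exp (x : ℝ) : sinh x ≤ exp x := by
  rw [sinh_eq]
  linarith [exp_pos x, exp_pos (-x)]

lemma sinh_mul_ne_zero {a t : ℝ} (ha : 0 < a) (ht : 0 < t) : sinh (a * t) ≠ 0 :=
  (sinh_pos_iff.2 (mul_pos ha ht)).ne'

lemma self_isBigO_sinh_mul {a : ℝ} (ha : 0 < a) :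
    (fun t => t) =O[𝓝[>] 0] fun t => sinh (a * t) := by
  refine .of_bound a⁻¹ (eventually_mem_nhdsWithin.mono fun t (ht : 0 < t) => ?_)
  have h := self_le_sinh_iff.2 (mul_pos ha ht).le
  rw [norm_of_nonneg ht.le, norm_of_nonneg (sinh_nonneg_iff.2 (mul_pos ha ht).le)]
  rwa [inv_mul_eq_div, le_div_iff₀' ha]

lemma sinh_mul_isBigO_exp_atTop (c : ℝ) :
    (fun t => sinh (c * t)) =O[atTop] fun t => exp (|c| * t) := by
  refine .of_norm_eventuallyLE ((eventually_ge_atTop 0).mono fun t ht => ?_)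
  dsimp only
  rw [norm_eq_abs, abs_sinh, abs_mul, abs_of_nonneg ht]
  exact sinh_le_exp _

section Integrability

variable {a b x : ℝ}

lemma doubleSineKernel_comm (a b x t : ℝ) :
    doubleSineKernel a b x t = doubleSineKernel b a x t := by
  simp only [doubleSineKernel, add_comm a b, mul_comm a b, mul_comm (sinh (a * t))]

lemma doubleSineKernel_isBigO_one (ha : 0 < a) (hb : 0 < b) (x : ℝ) :
    doubleSineKernel a b x =O[𝓝[>] 0] fun _ => (1 : ℝ) := by
  set c := a + b - 2 * x with hc
  have hsinh_sub (d : ℝ) := (sinh_mul_sub_isBigO d).mono (nhdsWithin_le_nhds (s := Ioi 0))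
  have hsinh := (sinh_mul_isBigO_self b).mono (nhdsWithin_le_nhds (s := Ioi 0))
  have hid (d : ℝ) : (fun t => d * t) =O[𝓝[>] 0] fun t => t := (isBigO_refl _ _).const_mul_left d
  have hnum : (fun t => a * b * t * (sinh (c * t) - c * t)
      - c * ((sinh (a * t) - a * t) * sinh (b * t) + a * t * (sinh (b * t) - b * t)))
      =O[𝓝[>] 0] fun t => t * (t * (t * t)) := by
    refine .sub (((hid (a * b)).mul (hsinh_sub c)).congr_right fun t => by ring)
      (.const_mul_left (.add ?_ ?_) c)
    · exact ((hsinh_sub a).mul hsinh).congr_right fun t => by ring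
    · exact ((hid a).mul (hsinh_sub b)).congr_right fun t => by ring
  have hden : (fun t => t * (t * (t * t)))
      =O[𝓝[>] 0] fun t => 2 * t * (a * b * t * (sinh (a * t) * sinh (b * t))) := by
    have h (d : ℝ) (hd : 0 < d) : (fun t => t) =O[𝓝[>] 0] fun t => d * t :=
      (isBigO_refl _ _).const_mul_right hd.ne'
    exact (h 2 two_pos).mul ((h (a * b) (by positivity)).mul
      ((self_isBigO_sinh_mul ha).mul (self_isBigO_sinh_mul hb)))
  refine ((hnum.mul (hden.inv_rev ?_)).congr' ?_ ?_)
  all_goals refine eventually_mem_nhdsWithin.mono fun t (ht : 0 < t) => ?_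
  · intro h0
    simp [ht.ne'] at h0
  · have hA := sinh_mul_ne_zero ha ht
    have hB := sinh_mul_ne_zero hb ht
    simp only [doubleSineKernel, ← hc]
    field_simp
    ring
  · field_simp

lemma doubleSineKernel_isBigO_atTop (ha : 0 < a) (hb : 0 < b) (hx : 0 < x) (hxab : x < a + b) :
    doubleSineKernel a b x =O[atTop] (· ^ (-2 : ℝ)) := by
  set c := a + b - 2 * x with hc
  have hcab : |c| < a + b := abs_lt.2 ⟨by linarith, by linarith⟩
  have hinv_sinh (d : ℝ) (hd : 0 < d) :
      (fun t => (sinh (d * t))⁻¹) =O[atTop] fun t => (exp (d * t))⁻¹ :=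
    (exp_isBigO_sinh_atTop.comp_tendsto (tendsto_id.const_mul_atTop hd)).inv_rev
      (.of_forall fun t h => absurd h (exp_pos _).ne')
  have hexp : (fun t => exp (|c| * t) * ((exp (a * t))⁻¹ * (exp (b * t))⁻¹))
      =O[atTop] (· ^ (-2 : ℝ)) :=
    (isLittleO_exp_neg_mul_rpow_atTop (sub_pos.2 hcab) (-2)).isBigO.congr_left fun t => by
      rw [← exp_neg, ← exp_neg, ← exp_add, ← exp_add]
      ring_nf
  have hinv : (fun t : ℝ => (2 * t)⁻¹) =O[atTop] fun _ => (1 : ℝ) :=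
    (tendsto_inv_atTop_zero.comp (tendsto_id.const_mul_atTop two_pos)).isBigO_one ℝ
  have hmain := (((sinh_mul_isBigO_exp_atTop c).mul
    ((hinv_sinh a ha).mul (hinv_sinh b hb))).trans hexp).mul hinv
  have hrpow := (isBigO_refl (fun t : ℝ => t ^ (-2 : ℝ)) atTop).const_mul_left (c / (2 * a * b))
  refine ((hmain.congr_right fun t => mul_one _).sub hrpow).congr' ?_ .rfl
  refine (eventually_gt_atTop 0).mono fun t ht => ?_
  have hpow : t ^ (-2 : ℝ) = (t ^ 2)⁻¹ := by rw [rpow_neg ht.le, rpow_two]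
  simp only [doubleSineKernel, hpow, ← hc]
  field_simp

lemma continuousOn_doubleSineKernel (ha : 0 < a) (hb : 0 < b) (x : ℝ) :
    ContinuousOn (doubleSineKernel a b x) (Ioi 0) := by
  have hsinh (c : ℝ) : ContinuousOn (fun t => sinh (c * t)) (Ioi 0) := by fun_prop
  refine .div (((hsinh _).div ((hsinh a).mul (hsinh b)) fun t ht => ?_).sub
    (.div (by fun_prop) (by fun_prop) fun t (ht : 0 < t) => ?_)) (by fun_prop)
    fun t (ht : 0 < t) => ?_
  · exact mul_ne_zero (sinh_mul_ne_zero ha ht) (sinh_mul_ne_zero hb ht)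
  all_goals positivity

lemma integrableOn_doubleSineKernel (ha : 0 < a) (hb : 0 < b) (hx : 0 < x) (hxab : x < a + b) :
    IntegrableOn (doubleSineKernel a b x) (Ioi 0) := by
  have hcont := continuousOn_doubleSineKernel ha hb x
  have hmeas : AEStronglyMeasurable (doubleSineKernel a b x) (volume.restrict (Ioi 0)) :=
    hcont.aestronglyMeasurable measurableSet_Ioi
  refine integrableOn_Ioi_iff_integrableAtFilter_atTop_nhdsWithin.2 ⟨?_, ?_,
    hcont.locallyIntegrableOn measurableSet_Ioi⟩
  · exact (doubleSineKernel_isBigO_atTop ha hb hx hxab).integrableAtFilter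
      ⟨Ioi 0, Ioi_mem_atTop 0, hmeas⟩ (integrableAtFilter_rpow_atTop_iff.2 (by norm_num))
  · exact (doubleSineKernel_isBigO_one ha hb x).integrableAtFilter
      (hcont.stronglyMeasurableAtFilter_nhdsWithin measurableSet_Ioi 0)
      ⟨Ioc 0 1, Ioc_mem_nhdsGT one_pos, integrableOn_const (by simp)⟩

end Integrability

/-- Integrand of an integral representation of `log (2 sin (πx))`, see `integral_sineKernel`. -/
noncomputable def sineKernel (x t : ℝ) : ℝ := (1 / t - cosh ((1 - 2 * x) * t) / sinh t) / t

section SineKernel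

variable {x : ℝ}

lemma doubleSineKernel_add_sub {a b t : ℝ} (ha : 0 < a) (hb : 0 < b) (ht : 0 < t) (x : ℝ) :
    doubleSineKernel a b (x + b) t - doubleSineKernel a b x t
      = a * sineKernel (x / a) (a * t) := by
  have hA := sinh_mul_ne_zero ha ht
  have hB := sinh_mul_ne_zero hb ht
  have hsub : sinh ((a + b - 2 * x) * t) = sinh ((a + b - 2 * (x + b)) * t)
      + 2 * cosh ((a - 2 * x) * t) * sinh (b * t) := by
    rw [show (a + b - 2 * x) * t = (a - 2 * x) * t + b * t by ring,
      show (a + b - 2 * (x + b)) * t = (a - 2 * x) * t - b * t by ring, sinh_add, sinh_sub]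
    ring
  have harg : (1 - 2 * (x / a)) * (a * t) = (a - 2 * x) * t := by field_simp
  rw [doubleSineKernel, doubleSineKernel, sineKernel, hsub, harg]
  field_simp
  ring

lemma integrableOn_sineKernel (hx : 0 < x) (hx1 : x < 1) : IntegrableOn (sineKernel x) (Ioi 0) := by
  refine ((integrableOn_doubleSineKernel one_pos one_pos (x := x + 1) (by linarith)
    (by linarith)).sub (integrableOn_doubleSineKernel one_pos one_pos hx (by linarith))).congr_fun
    (fun t ht => ?_) measurableSet_Ioi
  rw [Pi.sub_apply, doubleSineKernel_add_sub one_pos one_pos ht, div_one, one_mul, one_mul]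

lemma sineKernel_half_add_sineKernel (x : ℝ) {t : ℝ} (ht : 0 < t) :
    sineKernel (x / 2) t + sineKernel ((x + 1) / 2) t = 1 / 2 * sineKernel x (1 / 2 * t) := by
  obtain ⟨s, rfl⟩ : ∃ s, t = 2 * s := ⟨t / 2, by ring⟩
  have hsinh : sinh s ≠ 0 := (sinh_pos_iff.2 (by linarith)).ne'
  have hcosh : cosh s ≠ 0 := (cosh_pos s).ne'
  have hadd : cosh ((1 - 2 * (x / 2)) * (2 * s)) + cosh ((1 - 2 * ((x + 1) / 2)) * (2 * s))
      = 2 * cosh ((1 - 2 * x) * s) * cosh s := by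
    rw [show (1 - 2 * (x / 2)) * (2 * s) = (1 - 2 * x) * s + s by ring,
      show (1 - 2 * ((x + 1) / 2)) * (2 * s) = (1 - 2 * x) * s - s by ring, cosh_add, cosh_sub]
    ring
  simp only [sineKernel, one_div_mul_eq_div, mul_div_cancel_left₀ s two_ne_zero]
  rw [← add_div, sub_add_sub_comm, ← add_div (cosh _), hadd, sinh_two_mul]
  field_simp
  ring

lemma integral_sineKernel_half_add (hx : 0 < x) (hx1 : x < 1) :
    (∫ t in Ioi 0, sineKernel (x / 2) t) + ∫ t in Ioi 0, sineKernel ((x + 1) / 2) t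
      = ∫ t in Ioi 0, sineKernel x t := by
  rw [← integral_add (integrableOn_sineKernel (by linarith) (by linarith))
      (integrableOn_sineKernel (by linarith) (by linarith)),
    setIntegral_congr_fun measurableSet_Ioi fun t ht => sineKernel_half_add_sineKernel x ht,
    integral_const_mul, integral_comp_mul_left_Ioi _ _ one_half_pos]
  simp

lemma hasDerivAt_sineKernel {t : ℝ} (ht : 0 < t) (x : ℝ) :
    HasDerivAt (sineKernel · t) (2 * sinh ((1 - 2 * x) * t) / sinh t) x := by
  have hsinh : sinh t ≠ 0 := (sinh_pos_iff.2 ht).ne'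
  have harg : HasDerivAt (fun x : ℝ => (1 - 2 * x) * t) (-2 * t) x := by
    simpa using (((hasDerivAt_id x).const_mul 2).const_sub 1).mul_const t
  exact (((harg.cosh.div_const (sinh t)).const_sub (1 / t)).div_const t).congr_deriv
    (by field_simp)

lemma sinh_mul_le_exp_mul_sinh {a b t : ℝ} (hab : a ≤ b) (ht : 0 ≤ t) :
    sinh (a * t) ≤ exp (-(b - a) * t) * sinh (b * t) := by
  have hexp : exp (-(b - a) * t + -(b * t)) ≤ exp (-(a * t)) :=
    exp_le_exp.2 (by nlinarith [mul_nonneg (sub_nonneg.2 hab) ht])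
  rw [sinh_eq, sinh_eq, mul_div_assoc', mul_sub, ← exp_add, ← exp_add,
    show -(b - a) * t + b * t = a * t by ring]
  linarith

lemma norm_two_mul_sinh_div_sinh_le {c δ t : ℝ} (hδ : 0 ≤ δ) (hc : |c| ≤ 1 - δ) (ht : 0 < t) :
    ‖2 * sinh (c * t) / sinh t‖ ≤ 2 * exp (-δ * t) := by
  have hsinh : 0 < sinh t := sinh_pos_iff.2 ht
  have habs : sinh (|c| * t) ≤ exp (-δ * t) * sinh t := by
    have h := sinh_mul_le_exp_mul_sinh (show |c| ≤ 1 by linarith) ht.le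
    rw [one_mul] at h
    exact h.trans (by gcongr; linarith)
  rw [norm_eq_abs, abs_div, abs_of_pos hsinh, abs_mul, abs_two, abs_sinh, abs_mul, abs_of_pos ht,
    div_le_iff₀ hsinh]
  linarith

lemma integrableOn_two_mul_exp {a : ℝ} (ha : 0 < a) :
    IntegrableOn (fun t => 2 * exp (-(2 * a) * t)) (Ioi 0) :=
  (integrableOn_exp_mul_Ioi (by linarith) _).const_mul _

lemma integral_two_mul_exp {a : ℝ} (ha : 0 < a) :
    ∫ t in Ioi 0, 2 * exp (-(2 * a) * t) = 1 / a := by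
  rw [integral_const_mul, integral_exp_mul_Ioi (by linarith), mul_zero, exp_zero]
  field_simp

lemma integrableOn_two_mul_sinh_div_sinh {c : ℝ} (hc : |c| < 1) :
    IntegrableOn (fun t => 2 * sinh (c * t) / sinh t) (Ioi 0) := by
  refine Integrable.mono' (integrableOn_two_mul_exp (half_pos (sub_pos.2 hc))) ?_ ?_
  · refine ContinuousOn.aestronglyMeasurable ?_ measurableSet_Ioi
    exact .div (by fun_prop) (by fun_prop) fun t ht => (sinh_pos_iff.2 ht).ne'
  · refine (ae_restrict_mem measurableSet_Ioi).mono fun t ht => ?_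
    rw [mul_div_cancel₀ _ two_ne_zero]
    exact norm_two_mul_sinh_div_sinh_le (by linarith) (by linarith) ht

lemma hasDerivAt_integral_sineKernel (hx : 0 < x) (hx1 : x < 1) :
    HasDerivAt (fun x => ∫ t in Ioi 0, sineKernel x t)
      (∫ t in Ioi 0, 2 * sinh ((1 - 2 * x) * t) / sinh t) x := by
  obtain ⟨δ, hδ, hδx⟩ := exists_between (lt_min hx (sub_pos.2 hx1))
  obtain ⟨hδx, hxδ⟩ := lt_min_iff.1 hδx
  refine (hasDerivAt_integral_of_dominated_loc_of_deriv_le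
    (F' := fun x t => 2 * sinh ((1 - 2 * x) * t) / sinh t) (s := Ioo δ (1 - δ))
    (bound := fun t => 2 * exp (-(2 * δ) * t)) (Ioo_mem_nhds hδx (by linarith)) ?_
    (integrableOn_sineKernel hx hx1) ?_ ?_ ?_ ?_).2
  · filter_upwards [Ioo_mem_nhds hx hx1] with y hy
    exact (integrableOn_sineKernel hy.1 hy.2).1
  · exact (integrableOn_two_mul_sinh_div_sinh (abs_lt.2 ⟨by linarith, by linarith⟩)).1
  · refine (ae_restrict_mem measurableSet_Ioi).mono fun t ht y hy => ?_
    refine norm_two_mul_sinh_div_sinh_le (by linarith) (abs_le.2 ?_) ht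
    constructor <;> linarith [hy.1, hy.2]
  · exact integrableOn_two_mul_exp hδ
  · exact (ae_restrict_mem measurableSet_Ioi).mono fun t ht y _ => hasDerivAt_sineKernel ht y

lemma hasSum_cot_sub_one_div (hx : x ∉ range ((↑) : ℤ → ℝ)) :
    HasSum (fun n : ℕ => 1 / (x - (n + 1)) + 1 / (x + (n + 1))) (π * cot (π * x) - 1 / x) := by
  have hx' : (x : ℂ) ∈ Complex.integerComplement := fun ⟨m, hm⟩ => hx ⟨m, by exact_mod_cast hm⟩
  have h := (summable_cotTerm hx').hasSum
  rw [← cot_series_rep' hx'] at h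
  dsimp only [cotTerm] at h
  exact_mod_cast h

/- With `q = exp (-2t)` this is `sinh ((1 - 2x)t) / sinh t = (q ^ x - q ^ (1 - x)) / (1 - q)`,
regrouped so that for `0 ≤ x` every term of the geometric series is nonnegative. -/
lemma hasSum_exp_sub_exp (x : ℝ) {t : ℝ} (ht : 0 < t) :
    HasSum (fun n : ℕ => 2 * exp (-(2 * (n + 1 - x)) * t) - 2 * exp (-(2 * (n + 1 + x)) * t))
      (2 * exp (-(2 * x) * t) - 2 * sinh ((1 - 2 * x) * t) / sinh t) := by
  have hexp_mul (c d : ℝ) (n : ℕ) : exp (-(2 * (n + 1 + c)) * d)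
      = exp (-(2 * c) * d) * exp (-(2 * d)) * exp (-(2 * d)) ^ n := by
    rw [← exp_nat_mul, ← exp_add, ← exp_add]
    ring_nf
  have hgeom := (hasSum_geometric_of_lt_one (exp_pos (-(2 * t))).le
    (exp_lt_one_iff.2 (by linarith))).mul_left
    (2 * (exp (-(2 * -x) * t) - exp (-(2 * x) * t)) * exp (-(2 * t)))
  have hval : 2 * (exp (-(2 * -x) * t) - exp (-(2 * x) * t)) * exp (-(2 * t))
      * (1 - exp (-(2 * t)))⁻¹ = 2 * exp (-(2 * x) * t) - 2 * sinh ((1 - 2 * x) * t) / sinh t := by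
    have hu : exp t ^ 2 - 1 ≠ 0 := by nlinarith [one_lt_exp_iff.2 ht]
    rw [sinh_eq, sinh_eq, sub_mul, one_mul, neg_sub, mul_neg, neg_neg, exp_sub, exp_sub, neg_mul,
      exp_neg, exp_neg, exp_neg, mul_comm 2 t, exp_mul t 2, rpow_two]
    field_simp
    ring
  rw [← hval]
  refine hgeom.congr_fun fun n => ?_
  rw [sub_eq_add_neg _ x, hexp_mul, hexp_mul]
  ring

lemma integral_two_mul_sinh_div_sinh (hx : 0 < x) (hx1 : x < 1) :
    ∫ t in Ioi 0, 2 * sinh ((1 - 2 * x) * t) / sinh t = π * cot (π * x) := by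
  set F : ℕ → ℝ → ℝ := fun n t =>
    2 * exp (-(2 * (n + 1 - x)) * t) - 2 * exp (-(2 * (n + 1 + x)) * t)
  have hpos (n : ℕ) : 0 < (n : ℝ) + 1 - x ∧ 0 < (n : ℝ) + 1 + x := by
    constructor <;> linarith [n.cast_nonneg (α := ℝ)]
  have hF_int (n : ℕ) : IntegrableOn (F n) (Ioi 0) :=
    (integrableOn_two_mul_exp (hpos n).1).sub (integrableOn_two_mul_exp (hpos n).2)
  have hF_norm (n : ℕ) : ∫ t in Ioi 0, ‖F n t‖ = ∫ t in Ioi 0, F n t := by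
    refine setIntegral_congr_fun measurableSet_Ioi fun t (ht : 0 < t) => norm_of_nonneg ?_
    refine sub_nonneg.2 ?_
    gcongr
    linarith
  have hcot : HasSum (fun n => ∫ t in Ioi 0, F n t) (1 / x - π * cot (π * x)) := by
    have hx' : x ∉ range ((↑) : ℤ → ℝ) := by
      rintro ⟨m, rfl⟩
      norm_cast at hx hx1
      lia
    rw [← neg_sub]
    refine (hasSum_cot_sub_one_div hx').neg.congr_fun fun n => ?_
    obtain ⟨hsub, hadd⟩ := hpos n
    rw [integral_sub (integrableOn_two_mul_exp hsub) (integrableOn_two_mul_exp hadd),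
      integral_two_mul_exp hsub, integral_two_mul_exp hadd, ← neg_sub _ x,
      one_div_neg_eq_neg_one_div]
    ring
  have hF_sum := hasSum_integral_of_summable_integral_norm hF_int
    (by simpa only [hF_norm] using hcot.summable)
  rw [setIntegral_congr_fun measurableSet_Ioi fun t ht => (hasSum_exp_sub_exp x ht).tsum_eq,
    integral_sub (integrableOn_two_mul_exp hx) (integrableOn_two_mul_sinh_div_sinh
      (abs_lt.2 ⟨by linarith, by linarith⟩))] at hF_sum
  linarith [hF_sum.unique hcot, integral_two_mul_exp hx]

lemma hasDerivAt_log_two_mul_sin (hx : 0 < x) (hx1 : x < 1) :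
    HasDerivAt (fun x => log (2 * sin (π * x))) (π * cot (π * x)) x := by
  have hsin : sin (π * x) ≠ 0 :=
    (sin_pos_of_pos_of_lt_pi (by positivity) (by nlinarith [pi_pos])).ne'
  refine ((((hasDerivAt_id x).const_mul π).sin.const_mul 2).log
    (mul_ne_zero two_ne_zero hsin)).congr_deriv ?_
  simp only [id, cot_eq_cos_div_sin]
  field_simp

lemma log_two_mul_sin_half_add (hx : 0 < x) (hx1 : x < 1) :
    log (2 * sin (π * (x / 2))) + log (2 * sin (π * ((x + 1) / 2))) = log (2 * sin (π * x)) := by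
  have hpi := pi_pos
  have hsin : 0 < sin (π * (x / 2)) := sin_pos_of_pos_of_lt_pi (by positivity) (by nlinarith)
  have hcos : 0 < cos (π * (x / 2)) := cos_pos_of_mem_Ioo ⟨by nlinarith, by nlinarith⟩
  rw [show π * ((x + 1) / 2) = π * (x / 2) + π / 2 by ring, sin_add_pi_div_two,
    ← log_mul (by positivity) (by positivity), show π * x = 2 * (π * (x / 2)) by ring, sin_two_mul]
  ring_nf

theorem integral_sineKernel (hx : 0 < x) (hx1 : x < 1) :
    ∫ t in Ioi 0, sineKernel x t = log (2 * sin (π * x)) := by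
  set D : ℝ → ℝ := fun x => (∫ t in Ioi 0, sineKernel x t) - log (2 * sin (π * x)) with hD
  have hderiv (y : ℝ) (hy : y ∈ Ioo 0 1) : HasDerivAt D 0 y := by
    refine ((hasDerivAt_integral_sineKernel hy.1 hy.2).sub
      (hasDerivAt_log_two_mul_sin hy.1 hy.2)).congr_deriv ?_
    rw [integral_two_mul_sinh_div_sinh hy.1 hy.2, sub_self]
  have hconst (y : ℝ) (hy : y ∈ Ioo 0 1) : D y = D x :=
    isOpen_Ioo.is_const_of_deriv_eq_zero isPreconnected_Ioo
      (fun z hz => (hderiv z hz).differentiableAt.differentiableWithinAt)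
      (fun z hz => (hderiv z hz).deriv) hy ⟨hx, hx1⟩
  have hdup : D (x / 2) + D ((x + 1) / 2) = D x := by
    simp only [hD]
    rw [sub_add_sub_comm, integral_sineKernel_half_add hx hx1, log_two_mul_sin_half_add hx hx1]
  rw [hconst (x / 2) ⟨by linarith, by linarith⟩,
    hconst ((x + 1) / 2) ⟨by linarith, by linarith⟩] at hdup
  have hzero : D x = 0 := add_eq_left.1 hdup
  exact sub_eq_zero.1 hzero

end SineKernel

section DoubleSine

variable {a b x : ℝ}

lemma logDoubleSine_comm (a b x : ℝ) : logDoubleSine a b x = logDoubleSine b a x := by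
  simp only [logDoubleSine, doubleSineKernel_comm a b]

lemma logDoubleSine_add_right (ha : 0 < a) (hb : 0 < b) (hx : 0 < x) (hxa : x < a) :
    logDoubleSine a b (x + b) = logDoubleSine a b x + log (2 * sin (π * (x / a))) := by
  have hsub : logDoubleSine a b (x + b) - logDoubleSine a b x
      = ∫ t in Ioi 0, a * sineKernel (x / a) (a * t) := by
    rw [logDoubleSine, logDoubleSine,
      ← integral_sub (integrableOn_doubleSineKernel ha hb (by linarith) (by linarith))
        (integrableOn_doubleSineKernel ha hb hx (by linarith))]
    exact setIntegral_congr_fun measurableSet_Ioi fun t ht => doubleSineKernel_add_sub ha hb ht x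
  rw [integral_const_mul, integral_comp_mul_left_Ioi _ _ ha, mul_zero, smul_eq_mul,
    mul_inv_cancel_left₀ ha.ne',
    integral_sineKernel (by positivity) ((div_lt_one ha).2 hxa)] at hsub
  linarith

lemma logDoubleSine_add_left (ha : 0 < a) (hb : 0 < b) (hx : 0 < x) (hxb : x < b) :
    logDoubleSine a b (x + a) = logDoubleSine a b x + log (2 * sin (π * (x / b))) := by
  rw [logDoubleSine_comm a b, logDoubleSine_comm a b, logDoubleSine_add_right hb ha hx hxb]

lemma logDoubleSine_reflect (a b x : ℝ) :
    logDoubleSine a b (a + b - x) = -logDoubleSine a b x := by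
  rw [logDoubleSine, logDoubleSine, ← integral_neg]
  refine integral_congr_ae (.of_forall fun t => ?_)
  simp only [doubleSineKernel]
  rw [show a + b - 2 * (a + b - x) = -(a + b - 2 * x) by ring, neg_mul, sinh_neg]
  ring

lemma convexOn_sinh : ConvexOn ℝ (Ici 0) sinh := by
  refine MonotoneOn.convexOn_of_deriv (convex_Ici 0) continuous_sinh.continuousOn
    differentiable_sinh.differentiableOn ?_
  rw [interior_Ici, Real.deriv_sinh]
  exact cosh_strictMonoOn.monotoneOn.mono Ioi_subset_Ici_self

lemma convexOn_doubleSineKernel {t : ℝ} (ha : 0 < a) (hb : 0 < b) (ht : 0 < t) :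
    ConvexOn ℝ (Iic ((a + b) / 2)) (doubleSineKernel a b · t) := by
  refine ⟨convex_Iic _, fun x hx y hy p q hp hq hpq => ?_⟩
  have hsinh := convexOn_sinh.2 (x := (a + b - 2 * x) * t) (y := (a + b - 2 * y) * t)
    (mul_nonneg (by linarith [mem_Iic.1 hx]) ht.le)
    (mul_nonneg (by linarith [mem_Iic.1 hy]) ht.le) hp hq hpq
  obtain rfl : q = 1 - p := by linarith
  simp only [smul_eq_mul, doubleSineKernel] at hsinh ⊢
  calc _ = (sinh (p * ((a + b - 2 * x) * t) + (1 - p) * ((a + b - 2 * y) * t))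
          / (sinh (a * t) * sinh (b * t))
          - (a + b - 2 * (p * x + (1 - p) * y)) / (a * b * t)) / (2 * t) := by ring_nf
    _ ≤ ((p * sinh ((a + b - 2 * x) * t) + (1 - p) * sinh ((a + b - 2 * y) * t))
          / (sinh (a * t) * sinh (b * t))
          - (a + b - 2 * (p * x + (1 - p) * y)) / (a * b * t)) / (2 * t) := by gcongr
    _ = _ := by ring

lemma convexOn_logDoubleSine (ha : 0 < a) (hb : 0 < b) :
    ConvexOn ℝ (Ioc 0 ((a + b) / 2)) (logDoubleSine a b) :=
  integral_convexOn_of_integrand_ae (convex_Ioc _ _)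
    ((ae_restrict_mem measurableSet_Ioi).mono fun t ht =>
      (convexOn_doubleSineKernel ha hb ht).subset Ioc_subset_Iic_self (convex_Ioc _ _))
    fun x hx => integrableOn_doubleSineKernel ha hb hx.1 (by linarith [hx.2])

end DoubleSine

section Convex

variable {f : ℝ → ℝ} {x y z : ℝ}

lemma sub_mul_le_of_convexOn {s : Set ℝ} (hf : ConvexOn ℝ s f) (hx : x ∈ s) (hz : z ∈ s)
    (hxy : x ≤ y) (hyz : y ≤ z) : (z - x) * f y ≤ (z - y) * f x + (y - x) * f z := by
  rcases hxy.eq_or_lt with rfl | hxy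
  · simp
  rcases hyz.eq_or_lt with rfl | hyz
  · simp
  have h := hf.slope_mono_adjacent hx hz hxy hyz
  rw [div_le_div_iff₀ (by linarith) (by linarith)] at h
  linarith

lemma sub_mul_le_of_convexOn_of_odd {l m : ℝ} (hf : ConvexOn ℝ (Ioc l m) f)
    (hodd : ∀ x, f (2 * m - x) = 2 * f m - f x) (hx : l < x) (hxy : x ≤ y) (hyz : y ≤ z)
    (hz : z ≤ 2 * m - y) : (z - x) * f y ≤ (z - y) * f x + (y - x) * f z := by
  rcases le_or_gt z m with hzm | hzm
  · exact sub_mul_le_of_convexOn hf ⟨hx, by linarith⟩ ⟨by linarith, hzm⟩ hxy hyz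
  have hym : 0 < m - y := by linarith
  have hm : m ∈ Ioc l m := ⟨by linarith, le_rfl⟩
  have hleft := sub_mul_le_of_convexOn hf ⟨hx, by linarith⟩ hm hxy (by linarith)
  have hright := sub_mul_le_of_convexOn (y := 2 * m - z) hf (x := y) ⟨by linarith, by linarith⟩ hm
    (by linarith) (by linarith)
  rw [hodd] at hright
  refine le_of_mul_le_mul_left ?_ hym
  linear_combination (z - y) * hleft + (y - x) * hright

end Convex

section Renormalisation

/-- The logarithm of the Sudler product `∏_{j ≤ n} |2 sin (πjα)|`; `Real.log` supplies the
absolute values. -/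
noncomputable def logSudler (α : ℝ) (n : ℕ) : ℝ := ∑ j ∈ Finset.Icc 1 n, log (2 * sin (π * (j * α)))

lemma logSudler_zero (α : ℝ) : logSudler α 0 = 0 := by simp [logSudler]

lemma logSudler_succ (α : ℝ) (n : ℕ) :
    logSudler α (n + 1) = logSudler α n + log (2 * sin (π * ((n + 1) * α))) := by
  simp [logSudler, Finset.sum_Icc_succ_top]

lemma log_two_mul_sin_int_add (k : ℤ) (y : ℝ) :
    log (2 * sin (π * (k + y))) = log (2 * sin (π * y)) := by
  rw [show π * (k + y) = π * y + k * π by ring, sin_add_int_mul_pi]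
  rcases Int.even_or_odd k with hk | hk
  · rw [hk.neg_one_zpow, one_mul]
  · rw [hk.neg_one_zpow, neg_one_mul, mul_neg, log_neg_eq_log]

lemma log_two_mul_sin_nat_add (k : ℕ) (y : ℝ) :
    log (2 * sin (π * (k + y))) = log (2 * sin (π * y)) :=
  mod_cast log_two_mul_sin_int_add k y

lemma log_two_mul_sin_int_sub (k : ℤ) (y : ℝ) :
    log (2 * sin (π * (k - y))) = log (2 * sin (π * y)) := by
  rw [sub_eq_add_neg, log_two_mul_sin_int_add, mul_neg, sin_neg, mul_neg, log_neg_eq_log]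

lemma logSudler_add_one (α : ℝ) (n : ℕ) : logSudler (α + 1) n = logSudler α n := by
  refine Finset.sum_congr rfl fun j _ => ?_
  rw [mul_add_one, add_comm, log_two_mul_sin_nat_add]

variable {α y : ℝ}

/- The last factor of the product over `j ≤ N + 1` shifts `y` by the period `α` of the double sine
function; if this wraps around, the shift by the other period `1` is the new factor of the product
over `j ≤ M + 1`. -/
theorem logSudler_sub_logSudler_inv (hα : Irrational α) (hα0 : 0 < α) (hα1 : α < 1) (hy : 0 < y)
    (hy1 : y < 1) {N M : ℕ} (h : (N + 1) * α = M + y) :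
    logSudler α N - logSudler α⁻¹ M = logDoubleSine 1 α y - logDoubleSine 1 α α := by
  induction N generalizing M y with
  | zero =>
    obtain rfl : M = 0 := by
      have hM : (M : ℝ) < 1 := by
        push_cast at h
        linarith
      exact Nat.lt_one_iff.1 (mod_cast hM)
    obtain rfl : y = α := by simpa using h.symm
    simp [logSudler_zero]
  | succ N ih =>
    push_cast at h
    rcases lt_trichotomy y α with hlt | rfl | hgt
    · obtain ⟨M, rfl⟩ : ∃ m, M = m + 1 := Nat.exists_eq_succ_of_ne_zero <| by
        rintro rfl
        push_cast at h
        nlinarith [N.cast_nonneg (α := ℝ)]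
      push_cast at h
      have hprev : (N + 1) * α = M + (y + 1 - α) := by linarith
      have hinv : (M + 1) * α⁻¹ = ((N + 2 : ℤ) : ℝ) - y / α := by
        push_cast
        field_simp
        linarith
      have hshift := logDoubleSine_add_right (a := 1) (x := y + 1 - α) one_pos hα0 (by linarith)
        (by linarith)
      have hshift_one := logDoubleSine_add_left (a := 1) one_pos hα0 hy hlt
      rw [sub_add_cancel, div_one] at hshift
      rw [logSudler_succ, logSudler_succ, hprev, hinv, log_two_mul_sin_nat_add,
        log_two_mul_sin_int_sub]
      linarith [ih (by linarith) (by linarith) hprev]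
    · refine absurd ?_ ((hα.natCast_mul N.succ_ne_zero).ne_nat M)
      push_cast
      linarith
    · have hprev : (N + 1) * α = M + (y - α) := by linarith
      have hshift := logDoubleSine_add_right (a := 1) (x := y - α) one_pos hα0 (by linarith)
        (by linarith)
      rw [sub_add_cancel, div_one] at hshift
      rw [logSudler_succ, hprev, log_two_mul_sin_nat_add]
      linarith [ih (by linarith) (by linarith) hprev]

end Renormalisation

section Golden

variable {y z : ℝ}

lemma sq_inv_goldenRatio_add : φ⁻¹ ^ 2 + φ⁻¹ = 1 := by
  rw [inv_goldenRatio, neg_sq, goldenConj_sq]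
  ring

lemma three_fifths_lt_inv_goldenRatio : 3 / 5 < φ⁻¹ := by
  nlinarith [sq_inv_goldenRatio_add, inv_pos.2 goldenRatio_pos]

lemma inv_goldenRatio_lt_two_thirds : φ⁻¹ < 2 / 3 := by
  nlinarith [sq_inv_goldenRatio_add, inv_pos.2 goldenRatio_pos]

/-- The change of `logSudler φ⁻¹` under the renormalisation that replaces `n` by `⌊(n + 1)φ⁻¹⌋`,
as a function of the fractional part `y` of `(n + 1)φ⁻¹`. -/
noncomputable def goldenIncrement (y : ℝ) : ℝ := logDoubleSine 1 φ⁻¹ y - logDoubleSine 1 φ⁻¹ φ⁻¹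

theorem logSudler_sub_logSudler_eq_goldenIncrement (hy : 0 < y) (hy1 : y < 1) {N M : ℕ}
    (h : (N + 1) * φ⁻¹ = M + y) : logSudler φ⁻¹ N - logSudler φ⁻¹ M = goldenIncrement y := by
  have hinv : φ⁻¹⁻¹ = φ⁻¹ + 1 := by
    rw [inv_inv, inv_goldenRatio]
    linarith [goldenRatio_add_goldenConj]
  rw [goldenIncrement, ← logSudler_sub_logSudler_inv goldenRatio_irrational.inv
    (inv_pos.2 goldenRatio_pos) (inv_lt_one_of_one_lt₀ one_lt_goldenRatio) hy hy1 h, hinv,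
    logSudler_add_one]

lemma goldenIncrement_inv_goldenRatio : goldenIncrement φ⁻¹ = 0 := sub_self _

lemma goldenIncrement_two_mul_inv_goldenRatio_sub_one : goldenIncrement (2 * φ⁻¹ - 1) = 0 := by
  have hlo := three_fifths_lt_inv_goldenRatio
  have hhi := inv_goldenRatio_lt_two_thirds
  rw [← logSudler_sub_logSudler_eq_goldenIncrement (N := 1) (M := 1) (by linarith) (by linarith)
    (by push_cast; ring), sub_self]

lemma sub_mul_goldenIncrement_le {x : ℝ} (hx : 0 < x) (hxy : x ≤ y) (hyz : y ≤ z)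
    (hz : z ≤ 1 + φ⁻¹ - y) :
    (z - x) * goldenIncrement y ≤ (z - y) * goldenIncrement x + (y - x) * goldenIncrement z := by
  have hconv : ConvexOn ℝ (Ioc 0 ((1 + φ⁻¹) / 2)) goldenIncrement :=
    (convexOn_logDoubleSine one_pos (inv_pos.2 goldenRatio_pos)).add_const _
  refine sub_mul_le_of_convexOn_of_odd hconv (fun x => ?_) hx hxy hyz (by linarith)
  have hreflect := logDoubleSine_reflect 1 φ⁻¹ x
  have hmid := logDoubleSine_reflect 1 φ⁻¹ ((1 + φ⁻¹) / 2)
  rw [sub_half] at hmid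
  rw [mul_div_cancel₀ _ two_ne_zero]
  simp only [goldenIncrement]
  linarith

lemma goldenIncrement_nonpos (hy : 2 * φ⁻¹ - 1 ≤ y) (hy1 : y ≤ φ⁻¹) : goldenIncrement y ≤ 0 := by
  have hlo := three_fifths_lt_inv_goldenRatio
  have h := sub_mul_goldenIncrement_le (by linarith) hy hy1 (by linarith)
  rw [goldenIncrement_inv_goldenRatio, goldenIncrement_two_mul_inv_goldenRatio_sub_one, mul_zero,
    mul_zero, zero_add] at h
  exact nonpos_of_mul_nonpos_right h (by linarith [inv_goldenRatio_lt_two_thirds])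

lemma goldenIncrement_nonneg_of_le (hy : 0 < y) (hy1 : y ≤ 2 * φ⁻¹ - 1) :
    0 ≤ goldenIncrement y := by
  have hlo := three_fifths_lt_inv_goldenRatio
  have hhi := inv_goldenRatio_lt_two_thirds
  have h := sub_mul_goldenIncrement_le (z := φ⁻¹) hy hy1 (by linarith) (by linarith)
  rw [goldenIncrement_inv_goldenRatio, goldenIncrement_two_mul_inv_goldenRatio_sub_one, mul_zero,
    mul_zero, add_zero] at h
  exact nonneg_of_mul_nonneg_right h (by linarith)

lemma goldenIncrement_nonneg_of_ge (hy : φ⁻¹ ≤ y) (hy1 : y ≤ 1) : 0 ≤ goldenIncrement y := by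
  have hlo := three_fifths_lt_inv_goldenRatio
  have hhi := inv_goldenRatio_lt_two_thirds
  have h := sub_mul_goldenIncrement_le (x := 2 * φ⁻¹ - 1) (by linarith) (by linarith) hy
    (by linarith)
  rw [goldenIncrement_inv_goldenRatio, goldenIncrement_two_mul_inv_goldenRatio_sub_one, mul_zero,
    mul_zero, zero_add] at h
  exact nonneg_of_mul_nonneg_right h (by linarith)

lemma goldenIncrement_add_nonneg (hy : 2 * φ⁻¹ - 1 < y) (hy1 : y < φ⁻¹) (hz : 0 < z) (hz1 : z < 1)
    (hyz : z = φ⁻¹ - y * (1 + φ⁻¹) ∨ z = 1 + φ⁻¹ - y * (1 + φ⁻¹)) :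
    0 ≤ goldenIncrement y + goldenIncrement z := by
  have hlo := three_fifths_lt_inv_goldenRatio
  have hhi := inv_goldenRatio_lt_two_thirds
  have hsq := sq_inv_goldenRatio_add
  have hneg : φ⁻¹ * goldenIncrement y ≤ 0 :=
    mul_nonpos_of_nonneg_of_nonpos (by linarith) (goldenIncrement_nonpos hy.le hy1.le)
  rcases hyz with hyz | hyz
  · have hgap : 2 * φ⁻¹ - 1 - z = (1 + φ⁻¹) * (y - (2 * φ⁻¹ - 1)) := by
      linear_combination 2 * hsq - hyz
    have hzp : z ≤ 2 * φ⁻¹ - 1 := by nlinarith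
    have h := sub_mul_goldenIncrement_le hz hzp hy.le (by linarith)
    rw [goldenIncrement_two_mul_inv_goldenRatio_sub_one, hgap, mul_zero] at h
    have hmul : 0 ≤ (y - (2 * φ⁻¹ - 1))
        * (goldenIncrement z + (1 + φ⁻¹) * goldenIncrement y) := by linarith
    linarith [nonneg_of_mul_nonneg_right hmul (by linarith)]
  · have hgap : z - φ⁻¹ = (1 + φ⁻¹) * (φ⁻¹ - y) := by linear_combination hyz - hsq
    have hzα : φ⁻¹ ≤ z := by nlinarith
    have h := sub_mul_goldenIncrement_le (by linarith) hy1.le hzα (by linarith)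
    rw [goldenIncrement_inv_goldenRatio, hgap, mul_zero] at h
    have hmul : 0 ≤ (φ⁻¹ - y) * (goldenIncrement z + (1 + φ⁻¹) * goldenIncrement y) := by linarith
    linarith [nonneg_of_mul_nonneg_right hmul (by linarith)]

lemma exists_goldenIncrement_le_mul_abs :
    ∃ c, 0 ≤ c ∧ ∀ y, |y - φ⁻¹| ≤ (1 - φ⁻¹) / 2 → goldenIncrement y ≤ c * |y - φ⁻¹| := by
  have hlo := three_fifths_lt_inv_goldenRatio
  have hhi := inv_goldenRatio_lt_two_thirds
  have hden : 0 < (1 + φ⁻¹) / 2 - φ⁻¹ := by linarith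
  have hmid : 0 ≤ goldenIncrement ((1 + φ⁻¹) / 2) :=
    goldenIncrement_nonneg_of_ge (by linarith) (by linarith)
  refine ⟨goldenIncrement ((1 + φ⁻¹) / 2) / ((1 + φ⁻¹) / 2 - φ⁻¹), by positivity, fun y hy => ?_⟩
  rw [abs_le] at hy
  rcases le_total y φ⁻¹ with hle | hge
  · exact (goldenIncrement_nonpos (by linarith) hle).trans (by positivity)
  · have h := sub_mul_goldenIncrement_le (z := (1 + φ⁻¹) / 2) (by linarith) hge (by linarith)
      (by linarith)
    rw [goldenIncrement_inv_goldenRatio, mul_zero, zero_add] at h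
    rwa [abs_of_nonneg (sub_nonneg.2 hge), div_mul_eq_mul_div, le_div_iff₀' hden,
      mul_comm (goldenIncrement _)]

lemma exists_succ_mul_eq_natCast_add {α : ℝ} (hα : Irrational α) (hα0 : 0 < α) (N : ℕ) :
    ∃ (M : ℕ) (y : ℝ), 0 < y ∧ y < 1 ∧ (N + 1) * α = M + y := by
  have hpos : 0 ≤ (N + 1) * α := by positivity
  have hirr : Irrational ((N + 1) * α) := by exact_mod_cast hα.natCast_mul N.succ_ne_zero
  refine ⟨⌊(N + 1) * α⌋₊, (N + 1) * α - ⌊(N + 1) * α⌋₊, ?_, ?_, by ring⟩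
  · exact sub_pos.2 ((Nat.floor_le hpos).lt_of_ne (hirr.ne_nat _).symm)
  · linarith [Nat.lt_floor_add_one ((N + 1) * α)]

lemma eq_or_eq_of_succ_mul_inv_goldenRatio_eq {N M K : ℕ} {y z : ℝ} (hy : 0 < y) (hy1 : y < φ⁻¹)
    (hz : 0 < z) (hz1 : z < 1) (hM : (N + 1) * φ⁻¹ = M + y) (hK : (M + 1) * φ⁻¹ = K + z) :
    z = φ⁻¹ - y * (1 + φ⁻¹) ∨ z = 1 + φ⁻¹ - y * (1 + φ⁻¹) := by
  have hhi := inv_goldenRatio_lt_two_thirds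
  have hsq := sq_inv_goldenRatio_add
  have hsum : z + (K + M - N - 1 : ℤ) = φ⁻¹ - y * (1 + φ⁻¹) := by
    push_cast
    linear_combination (N + 1) * hsq - (1 + φ⁻¹) * hM - hK
  have hpos : 0 < y * (1 + φ⁻¹) := by positivity
  have hlt : y * (1 + φ⁻¹) < 1 := by nlinarith
  have hk : (K + M - N - 1 : ℤ) < 1 := by
    have : ((K + M - N - 1 : ℤ) : ℝ) < 1 := by linarith
    exact_mod_cast this
  have hk' : -2 < (K + M - N - 1 : ℤ) := by
    have : (-2 : ℝ) < ((K + M - N - 1 : ℤ) : ℝ) := by linarith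
    exact_mod_cast this
  obtain h | h : (K + M - N - 1 : ℤ) = 0 ∨ (K + M - N - 1 : ℤ) = -1 := by omega
  · left
    rwa [h, Int.cast_zero, add_zero] at hsum
  · right
    rw [h] at hsum
    push_cast at hsum
    linarith

lemma exists_lt_logSudler_le {N : ℕ} (hN : 2 ≤ N) :
    ∃ K < N, logSudler φ⁻¹ K ≤ logSudler φ⁻¹ N := by
  have hα : 0 < φ⁻¹ := inv_pos.2 goldenRatio_pos
  have hhi := inv_goldenRatio_lt_two_thirds
  have hdecomp := exists_succ_mul_eq_natCast_add goldenRatio_irrational.inv hα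
  obtain ⟨M, y, hy, hy1, hM⟩ := hdecomp N
  have hMN : M < N := by
    have hN' : (2 : ℝ) ≤ N := mod_cast hN
    have : (M : ℝ) < N := by nlinarith
    exact_mod_cast this
  have hstep := logSudler_sub_logSudler_eq_goldenIncrement hy hy1 hM
  rcases le_or_gt y (2 * φ⁻¹ - 1) with hle | hgt
  · exact ⟨M, hMN, by linarith [goldenIncrement_nonneg_of_le hy hle]⟩
  rcases le_or_gt φ⁻¹ y with hge | hlt
  · exact ⟨M, hMN, by linarith [goldenIncrement_nonneg_of_ge hge hy1.le]⟩
  obtain ⟨K, z, hz, hz1, hK⟩ := hdecomp M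
  have hKM : K ≤ M := by
    have : (K : ℝ) < M + 1 := by nlinarith
    exact Nat.lt_succ_iff.1 (mod_cast this)
  have hstep' := logSudler_sub_logSudler_eq_goldenIncrement hz hz1 hK
  have hsum := goldenIncrement_add_nonneg hgt hlt hz hz1
    (eq_or_eq_of_succ_mul_inv_goldenRatio_eq hy hlt hz hz1 hM hK)
  exact ⟨K, hKM.trans_lt hMN, by linarith⟩

theorem min_le_logSudler_inv_goldenRatio (N : ℕ) :
    min 0 (logSudler φ⁻¹ 1) ≤ logSudler φ⁻¹ N := by
  induction N using Nat.strong_induction_on with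
  | _ N ih =>
    match N with
    | 0 => exact (min_le_left _ _).trans_eq (logSudler_zero _).symm
    | 1 => exact min_le_right _ _
    | N + 2 =>
      obtain ⟨K, hK, hle⟩ := exists_lt_logSudler_le (N := N + 2) (by omega)
      exact (ih K hK).trans hle

lemma exists_logSudler_fib_succ_le : ∃ c, 0 ≤ c ∧ ∀ n, 3 ≤ n →
    logSudler φ⁻¹ (Nat.fib (n + 1)) ≤ logSudler φ⁻¹ (Nat.fib n) + c * φ⁻¹ ^ (n + 1) := by
  obtain ⟨c, hc, hinc⟩ := exists_goldenIncrement_le_mul_abs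
  refine ⟨c, hc, fun n hn => ?_⟩
  have hlo := three_fifths_lt_inv_goldenRatio
  have hhi := inv_goldenRatio_lt_two_thirds
  have hsq := sq_inv_goldenRatio_add
  have hfib : (Nat.fib (n + 1) + 1) * φ⁻¹ = Nat.fib n + (φ⁻¹ - ψ ^ (n + 1)) := by
    rw [← goldenConj_mul_fib_succ_add_fib, inv_goldenRatio]
    ring
  have habs : |ψ ^ (n + 1)| = φ⁻¹ ^ (n + 1) := by
    rw [abs_pow, abs_of_neg goldenConj_neg, inv_goldenRatio]
  have hsmall : |ψ ^ (n + 1)| ≤ 2 - 3 * φ⁻¹ := calc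
    _ ≤ φ⁻¹ ^ 4 := habs.trans_le (pow_le_pow_of_le_one (by linarith) (by linarith) (by omega))
    _ = 2 - 3 * φ⁻¹ := by linear_combination (φ⁻¹ ^ 2 - φ⁻¹ + 2) * hsq
  have hψ := abs_le.1 hsmall
  have hstep := logSudler_sub_logSudler_eq_goldenIncrement (by linarith) (by linarith) hfib
  have hbound := hinc (φ⁻¹ - ψ ^ (n + 1))
  rw [sub_sub_cancel_left, abs_neg, ← hstep, habs] at hbound
  linarith [hbound (by linarith)]

theorem exists_logSudler_fib_le : ∃ B, ∀ n, logSudler φ⁻¹ (Nat.fib (n + 3)) ≤ B := by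
  obtain ⟨c, hc, hstep⟩ := exists_logSudler_fib_succ_le
  have hanti : Antitone fun n => logSudler φ⁻¹ (Nat.fib (n + 3)) + c * φ⁻¹ ^ (n + 2) := by
    refine antitone_nat_of_succ_le fun n => ?_
    have hgeom : c * φ⁻¹ ^ (n + 4) + c * φ⁻¹ ^ (n + 3) = c * φ⁻¹ ^ (n + 2) := by
      linear_combination c * φ⁻¹ ^ (n + 2) * sq_inv_goldenRatio_add
    linarith [hstep (n + 3) (by omega)]
  refine ⟨_, fun n => (le_add_of_nonneg_right ?_).trans (hanti n.zero_le)⟩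
  have := inv_pos.2 goldenRatio_pos
  positivity

lemma frequently_logSudler_le : ∃ B, ∃ᶠ n in atTop, logSudler φ⁻¹ n ≤ B := by
  obtain ⟨B, hB⟩ := exists_logSudler_fib_le
  have hfib : Tendsto (fun n => Nat.fib (n + 3)) atTop atTop :=
    (tendsto_add_atTop_iff_nat 3).2 <| tendsto_atTop_mono' _
      ((eventually_ge_atTop 5).mono fun n hn => Nat.le_fib_self hn) tendsto_id
  exact ⟨B, hfib.frequently (.of_forall hB)⟩

end Golden

lemma liminf_div_eq_zero {ι : Type*} {l : Filter ι} {u v : ι → ℝ} {A B : ℝ}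
    (hv : Tendsto v l atTop) (hA : ∀ᶠ i in l, A ≤ u i) (hB : ∃ᶠ i in l, u i ≤ B) :
    liminf (fun i => u i / v i) l = 0 := by
  have hlower (ε : ℝ) (hε : 0 < ε) : ∀ᶠ i in l, -ε ≤ u i / v i := by
    filter_upwards [(hv.const_div_atTop A).eventually_const_le (neg_lt_zero.2 hε),
      hv.eventually_gt_atTop 0, hA] with i hi hvi hAi
    exact hi.trans (by gcongr)
  have hupper (ε : ℝ) (hε : 0 < ε) : ∃ᶠ i in l, u i / v i ≤ ε := by
    refine (hB.and_eventually (((hv.const_div_atTop B).eventually_le_const hε).and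
      (hv.eventually_gt_atTop 0))).mono fun i ⟨hBi, hi, hvi⟩ => le_trans ?_ hi
    gcongr
  have hbdd : IsBoundedUnder (· ≥ ·) l fun i => u i / v i :=
    isBoundedUnder_of_eventually_ge (hlower 1 one_pos)
  have hcobdd : IsCoboundedUnder (· ≥ ·) l fun i => u i / v i :=
    .of_frequently_le (hupper 1 one_pos)
  refine le_antisymm (le_of_forall_pos_le_add fun ε hε => ?_)
    (le_of_forall_pos_le_add fun ε hε => ?_)
  · simpa using liminf_le_of_frequently_le (hupper ε hε) hbdd
  · linarith [le_liminf_of_le hcobdd (hlower ε hε)]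

lemma sum_log_two_sub_two_mul_cos (α : ℝ) (n : ℕ) :
    ∑ j ∈ Finset.Icc 1 n, log (2 - 2 * cos (2 * π * j * α)) = 2 * logSudler α n := by
  rw [logSudler, Finset.mul_sum]
  refine Finset.sum_congr rfl fun j _ => ?_
  rw [show 2 * π * j * α = 2 * (π * (j * α)) by ring, cos_two_mul, cos_sq',
    show 2 - 2 * (2 * (1 - sin (π * (j * α)) ^ 2) - 1) = (2 * sin (π * (j * α))) ^ 2 by ring,
    log_pow, Nat.cast_ofNat]

end

/-- for the golden mean `α = (√5 - 1)/2` and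
`Sℓ(n) = Σ_{j=1}^n log(2 - 2cos(2πjα))`, one has `liminf_{n→∞} Sℓ(n)/log(n) = 0`. -/
theorem stmt12 (α : ℝ) (hα : α = (Real.sqrt 5 - 1) / 2)
    (Sl : ℕ → ℝ)
    (hSl : ∀ n : ℕ, Sl n = ∑ j ∈ Finset.Icc 1 n,
      Real.log (2 - 2 * Real.cos (2 * Real.pi * j * α))) :
    liminf (fun n : ℕ => Sl n / Real.log n) atTop = 0 := by
  obtain rfl : α = Real.goldenRatio⁻¹ := by
    rw [hα, Real.inv_goldenRatio, Real.goldenConj]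
    ring
  simp only [sum_log_two_sub_two_mul_cos] at hSl
  obtain ⟨B, hB⟩ := frequently_logSudler_le
  have hlog : Tendsto (fun n : ℕ => Real.log n) atTop atTop :=
    Real.tendsto_log_atTop.comp tendsto_natCast_atTop_atTop
  refine liminf_div_eq_zero (A := 2 * min 0 (logSudler Real.goldenRatio⁻¹ 1)) (B := 2 * B) hlog
    (.of_forall fun n => ?_) (hB.mono fun n hn => ?_)
  · linarith [hSl n, min_le_logSudler_inv_goldenRatio n]
  · linarith [hSl n]
end

section
/- Let α = (√5 − 1)/2 be the golden mean, Sℓ(n) = Σ_{j=1}^{n} log(2 − 2cos(2πjα)), and let q_n denote the denominators of the continued fraction convergents of α, i.e. the Fibonacci numbers q_1 = 1, q_2 = 2, q_{n+1} = q_n + q_{n−1}. Then the sequence Sℓ(q_n) converges as n → ∞ to a limit L, this limit is strictly positive, and liminf_{n→∞} Sℓ(n) = L. -/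
open Filter

/-- The denominators of the continued fraction convergents of the golden mean:
the Fibonacci numbers with `fibq 1 = 1`, `fibq 2 = 2`, `fibq (n+1) = fibq n + fibq (n-1)`. -/
def fibq : ℕ → ℕ
  | 0 => 1
  | 1 => 1
  | (n + 2) => fibq (n + 1) + fibq n

/-!
Let `ω = (√5 - 1) / 2`. In increasing order, the multiples `r ω` modulo `1`, `1 ≤ r < fib (n + 1)`,
form a scaled piece of the Fibonacci chain, which has no point in the range of shifts needed below;
so the logarithm of a block of `fib (n + 1)` consecutive factors of the Sudler product is a concave
function of its shift. At the two extreme shifts met in the Zeckendorf decomposition of an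
arbitrary length, this logarithm is a difference of two logarithmic products of lengths
`fib m - 1`. If those increase with `m`, every block but the largest contributes nonnegatively, and
the limit inferior is attained along the Fibonacci numbers.

The logarithms `U n` of the products of length `fib (n + 1)` satisfy
`U (n + 2) = U (n + 1) + U n - c n` with `c` convergent. They grow at most linearly, whereas the
homogeneous recurrence has an exponentially growing solution; excluding the latter forces
`U (n + 1) + ω U n = ∑ j, ω ^ (j + 1) * c (n + j)`, so `U` converges to the limit of `c`. With
explicit bounds for `c`, the same identity and an upper bound for `U (n + 1) - (1 + ω) U n` give
`-log ω ≤ U n`, from which both the positivity of the limit and the monotonicity above follow.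
-/

namespace GoldenSudler

open Finset Real Topology
open Nat (fib fib_add_two)

/-! ### Logarithms of chord lengths -/

/-- The logarithm of the chord length `|1 - e^{2πix}| = |2 sin (πx)|`; the absolute value is
implicit in Mathlib's `Real.log`. -/
noncomputable def logChord (x : ℝ) : ℝ := log (2 * sin (π * x))

lemma logChord_neg (x : ℝ) : logChord (-x) = logChord x := by
  simp [logChord, log_neg_eq_log]

lemma logChord_add_int (x : ℝ) (z : ℤ) : logChord (x + z) = logChord x := by
  rw [logChord, logChord, mul_add, mul_comm π (z : ℝ), sin_add_int_mul_pi, ← log_abs,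
    ← log_abs (2 * sin (π * x)), abs_mul, abs_mul, abs_mul, abs_neg_one_zpow, one_mul]

lemma logChord_congr {x y : ℝ} (z : ℤ) (h : x = y + z) : logChord x = logChord y := by
  rw [h, logChord_add_int]

lemma logChord_one_sub (x : ℝ) : logChord (1 - x) = logChord x := by
  rw [← logChord_neg x]
  exact logChord_congr 1 (by push_cast; ring)

lemma logChord_neg_one_pow_mul (n : ℕ) (x : ℝ) : logChord ((-1) ^ n * x) = logChord x := by
  rcases neg_one_pow_eq_or ℝ n with h | h <;> simp [h, logChord_neg]

lemma log_two_sub_two_mul_cos (x : ℝ) : log (2 - 2 * cos (2 * (π * x))) = 2 * logChord x := by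
  have h : 2 - 2 * cos (2 * (π * x)) = (2 * sin (π * x)) ^ 2 := by
    rw [cos_two_mul, mul_pow, sin_sq]
    ring
  rw [h, log_pow, logChord, Nat.cast_ofNat]

lemma pi_sq_le_ten : π ^ 2 ≤ 10 := by
  nlinarith [pi_lt_d2, pi_pos]

lemma sin_pi_mul_pos {x : ℝ} (h0 : 0 < x) (h1 : x < 1) : 0 < sin (π * x) :=
  sin_pos_of_pos_of_lt_pi (by positivity) (mul_lt_of_lt_one_right pi_pos h1)

lemma sin_pi_mul_one_sub (x : ℝ) : sin (π * (1 - x)) = sin (π * x) := by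
  rw [mul_sub, mul_one, sin_pi_sub]

lemma sin_pi_mul_le {x : ℝ} (hx : 0 ≤ x) : sin (π * x) ≤ π * x :=
  sin_le (by positivity)

lemma two_mul_le_sin_pi_mul {x : ℝ} (h0 : 0 ≤ x) (h1 : x ≤ 1 / 2) : 2 * x ≤ sin (π * x) := by
  have h := le_sin_mul (x := 2 * x) (by linarith) (by linarith)
  rwa [show π / 2 * (2 * x) = π * x by ring] at h

lemma one_sub_sq_div_two_le_sin_pi_mul (x : ℝ) :
    1 - (π * (x - 1 / 2)) ^ 2 / 2 ≤ sin (π * x) := by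
  have h : cos (π * (x - 1 / 2)) = sin (π * x) := by
    rw [← cos_sub_pi_div_two]
    ring_nf
  exact h ▸ one_sub_sq_div_two_le_cos

lemma mul_sin_le_sin_mul {t y : ℝ} (ht0 : 0 ≤ t) (ht1 : t ≤ 1) (hy0 : 0 ≤ y) (hy : y ≤ π) :
    t * sin y ≤ sin (t * y) := by
  have h := strictConcaveOn_sin_Icc.concaveOn.2 (x := y) (y := 0) ⟨hy0, hy⟩
    ⟨le_rfl, pi_pos.le⟩ ht0 (sub_nonneg.2 ht1) (by ring)
  simpa using h

lemma sin_add_mul_sin_add (x a b : ℝ) :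
    sin (x + a) * sin (x + b) = sin x * sin (x + (a + b)) + sin a * sin b := by
  simp only [sin_add, cos_add]
  linear_combination (sin a * sin b) * sin_sq_add_cos_sq x

lemma tendsto_sin_pi_mul_div (a : ℝ) :
    Tendsto (fun x => sin (π * (x * a)) / x) (𝓝[≠] 0) (𝓝 (π * a)) := by
  have hlin : HasDerivAt (fun x : ℝ => π * (x * a)) (π * a) 0 := by
    simpa using ((hasDerivAt_id (0 : ℝ)).mul_const a).const_mul π
  have hsin : HasDerivAt (fun x : ℝ => sin (π * (x * a))) (π * a) 0 := by
    simpa using hlin.sin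
  refine hsin.tendsto_slope_zero.congr fun x => ?_
  simp [div_eq_inv_mul]

lemma logChord_le_log_two {x : ℝ} (h0 : 0 < x) (h1 : x < 1) : logChord x ≤ log 2 := by
  have hsin := sin_pi_mul_pos h0 h1
  exact log_le_log (by positivity) (by linarith [sin_le_one (π * x)])

lemma logChord_le_log_two_pi_mul {x : ℝ} (h0 : 0 < x) (h1 : x < 1) :
    logChord x ≤ log (2 * (π * x)) := by
  have hsin := sin_pi_mul_pos h0 h1
  exact log_le_log (by positivity) (by linarith [sin_pi_mul_le h0.le])

lemma logChord_le_two_pi_mul_sub_one {x : ℝ} (h0 : 0 < x) (h1 : x < 1) :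
    logChord x ≤ 2 * (π * x) - 1 :=
  (logChord_le_log_two_pi_mul h0 h1).trans (log_le_sub_one_of_pos (by positivity))

lemma log_two_pi_mul_add_le_logChord {x b : ℝ} (hx : 0 < x) (hb : 0 < b)
    (hbx : b ≤ 1 - 5 / 3 * x ^ 2) : log (2 * (π * x)) + (1 - b⁻¹) ≤ logChord x := by
  have hpi := mul_le_mul_of_nonneg_right pi_sq_le_ten (sq_nonneg x)
  have hmul : π * x * b ≤ sin (π * x) :=
    calc π * x * b ≤ π * x * (1 - (π * x) ^ 2 / 6) :=
          mul_le_mul_of_nonneg_left (by linarith [mul_pow π x 2]) (by positivity)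
      _ = π * x - (π * x) ^ 3 / 6 := by ring
      _ ≤ sin (π * x) := sin_ge_sub_cube (by positivity)
  calc log (2 * (π * x)) + (1 - b⁻¹) ≤ log (2 * (π * x)) + log b :=
        add_le_add_right (one_sub_inv_le_log_of_pos hb) _
    _ = log (2 * (π * x) * b) := (log_mul (by positivity) hb.ne').symm
    _ ≤ logChord x := log_le_log (by positivity) (by linarith)

lemma log_le_logChord {x : ℝ} (h0 : 0 < x) (h1 : x ≤ 1 / 2) : log x ≤ logChord x :=
  log_le_log h0 (by linarith [two_mul_le_sin_pi_mul h0.le h1])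

lemma logChord_add_logChord {x y : ℝ} (hx0 : 0 < x) (hx1 : x < 1) (hy0 : 0 < y) (hy1 : y < 1) :
    logChord x + logChord y = log (4 * (sin (π * x) * sin (π * y))) := by
  have hx := sin_pi_mul_pos hx0 hx1
  have hy := sin_pi_mul_pos hy0 hy1
  rw [logChord, logChord, ← log_mul (by positivity) (by positivity)]
  congr 1
  ring

lemma logChord_add_log_div_le {x y : ℝ} (hx : 0 < x) (hxy : x ≤ y) (hy : y < 1) :
    logChord y + log (x / y) ≤ logChord x := by
  have hy0 : 0 < y := hx.trans_le hxy
  have hsin := sin_pi_mul_pos hy0 hy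
  have hscale : x / y * sin (π * y) ≤ sin (x / y * (π * y)) :=
    mul_sin_le_sin_mul (by positivity) ((div_le_one hy0).2 hxy) (by positivity)
      (mul_le_of_le_one_right pi_pos.le hy.le)
  rw [show x / y * (π * y) = π * x by field_simp] at hscale
  rw [logChord, logChord, ← log_mul (by positivity) (by positivity)]
  exact log_le_log (by positivity) (by linarith)

lemma logChord_sub_div_le {x y : ℝ} (hx : 0 < x) (hxy : x ≤ y) (hy : y < 1) :
    logChord y - (y - x) / x ≤ logChord x := by
  have hy0 : 0 < y := hx.trans_le hxy
  have hlog : 1 - (x / y)⁻¹ ≤ log (x / y) := one_sub_inv_le_log_of_pos (by positivity)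
  have hdiv : 1 - (x / y)⁻¹ = -((y - x) / x) := by
    field_simp
    ring
  linarith [logChord_add_log_div_le hx hxy hy]

lemma concaveOn_logChord : ConcaveOn ℝ (Set.Ioo 0 1) logChord := by
  refine ⟨convex_Ioo 0 1, fun x hx y hy a b ha hb hab => ?_⟩
  have hsin_pos {z : ℝ} (hz : z ∈ Set.Ioo 0 1) : 2 * sin (π * z) ∈ Set.Ioi 0 :=
    mul_pos two_pos (sin_pi_mul_pos hz.1 hz.2)
  have hmem {z : ℝ} (hz : z ∈ Set.Ioo 0 1) : π * z ∈ Set.Icc 0 π :=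
    ⟨mul_nonneg pi_pos.le hz.1.le, mul_le_of_le_one_right pi_pos.le hz.2.le⟩
  have hsin : a * (2 * sin (π * x)) + b * (2 * sin (π * y)) ≤ 2 * sin (π * (a * x + b * y)) := by
    have h := strictConcaveOn_sin_Icc.concaveOn.2 (hmem hx) (hmem hy) ha hb hab
    simp only [smul_eq_mul] at h
    rw [show π * (a * x + b * y) = a * (π * x) + b * (π * y) by ring]
    linarith
  exact (strictConcaveOn_log_Ioi.concaveOn.2 (hsin_pos hx) (hsin_pos hy) ha hb hab).trans
    (log_le_log (convex_Ioi (0 : ℝ) (hsin_pos hx) (hsin_pos hy) ha hb hab) hsin)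

lemma concaveOn_logChord_sub {a b y : ℝ} (hb : b < y) (ha : y < 1 + a) :
    ConcaveOn ℝ (Set.Icc a b) fun x => logChord (y - x) := by
  have hmem {x : ℝ} (hx : x ∈ Set.Icc a b) : y - x ∈ Set.Ioo 0 1 :=
    ⟨by linarith [hx.2], by linarith [hx.1]⟩
  refine ⟨convex_Icc a b, fun x hx z hz s t hs ht hst => ?_⟩
  convert concaveOn_logChord.2 (hmem hx) (hmem hz) hs ht hst using 2
  simp only [smul_eq_mul]
  linear_combination (-y) * hst

/-- Taking absolute values in `∏ (1 - ζ ^ k) = q`, with `ζ` a primitive `q`-th root of unity. -/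
lemma sum_logChord_div {q : ℕ} (hq : 0 < q) : ∑ k ∈ Ico 1 q, logChord (k / q) = log q := by
  obtain ⟨n, rfl⟩ : ∃ n, q = n + 1 := ⟨q - 1, by omega⟩
  have hζ := Complex.isPrimitiveRoot_exp (n + 1) (by omega)
  set ζ := Complex.exp (2 * π * Complex.I / (n + 1 : ℕ))
  have hchord (k : ℕ) : logChord ((1 + k : ℕ) / (n + 1 : ℕ)) = log ‖1 - ζ ^ (k + 1)‖ := by
    rw [norm_sub_rev, ← Complex.exp_nat_mul, show ((k + 1 : ℕ) : ℂ) * (2 * π * Complex.I /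
        (n + 1 : ℕ)) = Complex.I * ((2 * π * ((k + 1 : ℕ) / (n + 1 : ℕ) : ℝ) : ℝ) : ℂ) by
      push_cast; ring, Complex.norm_exp_I_mul_ofReal_sub_one, norm_eq_abs, log_abs, logChord]
    congr 3
    push_cast
    ring
  have hne : ∀ k ∈ range n, ‖1 - ζ ^ (k + 1)‖ ≠ 0 := fun k hk => by
    rw [mem_range] at hk
    rw [norm_ne_zero_iff, sub_ne_zero]
    exact (hζ.pow_ne_one_of_pos_of_lt (by omega) (by omega)).symm
  rw [sum_Ico_eq_sum_range, Nat.add_sub_cancel, sum_congr rfl fun k _ => hchord k,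
    ← log_prod hne, ← norm_prod, hζ.prod_one_sub_pow_eq_order, ← Nat.cast_succ,
    Complex.norm_natCast]

/-! ### Shifted Sudler products -/

/-- The logarithm of the shifted Sudler product `∏_{r=1}^N |2 sin (π (rα + s))|`. -/
noncomputable def logSudler (α : ℝ) (N : ℕ) (s : ℝ) : ℝ :=
  ∑ r ∈ range N, logChord ((r + 1 : ℕ) * α + s)

section LogSudler

variable (α : ℝ)

lemma logSudler_zero (s : ℝ) : logSudler α 0 s = 0 := sum_range_zero _

lemma logSudler_succ (N : ℕ) (s : ℝ) :
    logSudler α (N + 1) s = logSudler α N s + logChord ((N + 1 : ℕ) * α + s) :=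
  sum_range_succ _ N

lemma logSudler_eq_sum_Ico (N : ℕ) (s : ℝ) :
    logSudler α N s = ∑ r ∈ Ico 1 (N + 1), logChord (r * α + s) := by
  rw [sum_Ico_eq_sum_range, Nat.add_sub_cancel]
  exact sum_congr rfl fun r _ => by rw [add_comm 1 r]

lemma logSudler_add (M N : ℕ) (s : ℝ) :
    logSudler α (M + N) s = logSudler α M s + logSudler α N (s + M * α) := by
  unfold logSudler
  rw [sum_range_add]
  congr! 3
  push_cast
  ring

lemma logSudler_congr (N : ℕ) {s t : ℝ} (z : ℤ) (h : s = t + z) :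
    logSudler α N s = logSudler α N t :=
  sum_congr rfl fun _ _ => logChord_congr z (by rw [h]; ring)

/-- The shift by `-(M + N + 1) α` turns the block `1, …, N` into `-(M + N), …, -(M + 1)`, and
`logChord` is even. -/
lemma logSudler_neg_mul (N M : ℕ) :
    logSudler α N (-((M + N + 1 : ℕ) * α)) = logSudler α (M + N) 0 - logSudler α M 0 := by
  rw [logSudler_add, add_sub_cancel_left, logSudler, ← sum_range_reflect, logSudler]
  refine sum_congr rfl fun r hr => ?_
  rw [mem_range] at hr
  rw [← logChord_neg, show N - 1 - r + 1 = N - r by omega, Nat.cast_sub hr.le]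
  congr 1
  push_cast
  ring

lemma sum_log_two_sub_two_mul_cos (n : ℕ) :
    ∑ j ∈ Icc 1 n, log (2 - 2 * cos (2 * π * j * α)) = 2 * logSudler α n 0 := by
  rw [logSudler_eq_sum_Ico, mul_sum, Ico_add_one_right_eq_Icc]
  refine sum_congr rfl fun j _ => ?_
  rw [add_zero, ← log_two_sub_two_mul_cos]
  ring_nf

end LogSudler

/-! ### The golden mean and the Fibonacci numbers -/

/-- The golden mean `(√5 - 1) / 2`, the positive root of `x ^ 2 = 1 - x`. -/
noncomputable def goldenMean : ℝ := (√5 - 1) / 2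

local notation "ω" => goldenMean

lemma goldenMean_eq_neg_goldenConj : ω = -goldenConj := by
  rw [goldenMean, goldenConj]
  ring

lemma goldenMean_sq : ω ^ 2 = 1 - ω := by
  rw [goldenMean_eq_neg_goldenConj, neg_sq, goldenConj_sq]
  ring

lemma lt_goldenMean : 0.618 < ω := by
  have h : 2.236 < √5 := lt_sqrt_of_sq_lt (by norm_num)
  rw [goldenMean]
  linarith

lemma goldenMean_lt : ω < 0.61804 := by
  have h : √5 < 2.23608 := (sqrt_lt' (by norm_num)).2 (by norm_num)
  rw [goldenMean]
  linarith

lemma goldenMean_pos : 0 < ω := by linarith [lt_goldenMean]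

lemma goldenMean_lt_one : ω < 1 := by linarith [goldenMean_lt]

lemma goldenMean_pow_pos (n : ℕ) : 0 < ω ^ n := pow_pos goldenMean_pos n

lemma goldenMean_pow_lt_one {n : ℕ} (hn : n ≠ 0) : ω ^ n < 1 :=
  pow_lt_one₀ goldenMean_pos.le goldenMean_lt_one hn

lemma goldenMean_pow_le_pow {m n : ℕ} (h : m ≤ n) : ω ^ n ≤ ω ^ m :=
  pow_le_pow_of_le_one goldenMean_pos.le goldenMean_lt_one.le h

lemma tendsto_goldenMean_pow : Tendsto (fun n : ℕ => ω ^ n) atTop (𝓝 0) :=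
  tendsto_pow_atTop_nhds_zero_of_lt_one goldenMean_pos.le goldenMean_lt_one

lemma goldenMean_pow_add_two (n : ℕ) : ω ^ (n + 2) = ω ^ n - ω ^ (n + 1) := by
  linear_combination ω ^ n * goldenMean_sq

lemma goldenMean_cube : ω ^ 3 = 2 * ω - 1 := by
  linear_combination (ω - 1) * goldenMean_sq

lemma goldenMean_pow_four : ω ^ 4 = 2 - 3 * ω := by
  linear_combination (ω ^ 2 - ω + 2) * goldenMean_sq

lemma goldenMean_pow_five : ω ^ 5 = 5 * ω - 3 := by
  linear_combination (ω ^ 3 - ω ^ 2 + 2 * ω - 3) * goldenMean_sq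

lemma le_log_goldenMean : -0.486 ≤ log ω := by
  have hpow : ((2 : ℝ) ^ 7)⁻¹ ≤ ω ^ 10 :=
    le_trans (by norm_num) (pow_le_pow_left₀ (by norm_num) lt_goldenMean.le 10)
  have h := log_le_log (by positivity) hpow
  rw [log_inv, log_pow, log_pow] at h
  push_cast at h
  linarith [log_two_lt_d9]

lemma log_goldenMean_le : log ω ≤ -0.479 := by
  have hpow : ω ^ 13 ≤ ((2 : ℝ) ^ 9)⁻¹ :=
    (pow_le_pow_left₀ goldenMean_pos.le goldenMean_lt.le 13).trans (by norm_num)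
  have h := log_le_log (goldenMean_pow_pos 13) hpow
  rw [log_inv, log_pow, log_pow] at h
  push_cast at h
  linarith [log_two_gt_d9]

lemma fib_succ_mul_goldenMean (n : ℕ) :
    (fib (n + 1) : ℝ) * ω = fib n + (-1) ^ n * ω ^ (n + 1) := by
  have h := goldenConj_mul_fib_succ_add_fib n
  rw [show goldenConj = -ω by rw [goldenMean_eq_neg_goldenConj, neg_neg], neg_pow, pow_succ] at h
  linear_combination -h

lemma exists_int_fib_mul_goldenMean (n : ℕ) :
    ∃ z : ℤ, (fib n : ℝ) * ω = z - (-1) ^ n * ω ^ n := by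
  cases n with
  | zero => exact ⟨1, by simp⟩
  | succ n =>
    refine ⟨fib n, ?_⟩
    rw [fib_succ_mul_goldenMean, Int.cast_natCast]
    ring

lemma goldenMean_pow_mul_fib (n : ℕ) : ω ^ n * fib (n + 1) + ω ^ (n + 1) * fib n = 1 := by
  have h := fib_succ_sub_goldenConj_mul_fib n
  rw [← inv_inv goldenRatio, inv_goldenRatio, ← goldenMean_eq_neg_goldenConj,
    show goldenConj = -ω by rw [goldenMean_eq_neg_goldenConj, neg_neg], inv_pow] at h
  calc ω ^ n * fib (n + 1) + ω ^ (n + 1) * fib n = ω ^ n * (fib (n + 1) - -ω * fib n) := by ring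
    _ = 1 := by rw [h, mul_inv_cancel₀ (goldenMean_pow_pos n).ne']

lemma fib_succ_mul_goldenMean_pow_le_one (n : ℕ) : fib (n + 1) * ω ^ n ≤ 1 := by
  have h : 0 ≤ ω ^ (n + 1) * fib n := mul_nonneg (goldenMean_pow_pos _).le (Nat.cast_nonneg _)
  linarith [goldenMean_pow_mul_fib n]

lemma logSudler_add_fib_mul (N n : ℕ) (s : ℝ) :
    logSudler ω N (s + fib (n + 1) * ω) = logSudler ω N (s + (-1) ^ n * ω ^ (n + 1)) :=
  logSudler_congr ω N (fib n) (by rw [fib_succ_mul_goldenMean, Int.cast_natCast]; ring)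

/-! ### The orbit points in increasing order -/

/-- The points of the Fibonacci chain, with gaps `1` and `1 + ω`. -/
noncomputable def fibChain (k : ℕ) : ℝ := k + ⌊k * ω⌋₊ * ω

/-- For `1 ≤ k < fib (n + 1)`, the `k`-th smallest of the multiples `r ω`, `1 ≤ r < fib (n + 1)`,
reduced modulo `1`; the circle is reversed when `n` is even. -/
noncomputable def orbitPoint (n k : ℕ) : ℝ := ω ^ n * fibChain k

lemma natCast_le_fibChain (k : ℕ) : (k : ℝ) ≤ fibChain k :=
  le_add_of_nonneg_right (mul_nonneg (Nat.cast_nonneg _) goldenMean_pos.le)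

lemma one_le_fibChain {k : ℕ} (hk : 1 ≤ k) : 1 ≤ fibChain k :=
  (Nat.one_le_cast.2 hk).trans (natCast_le_fibChain k)

lemma monotone_fibChain : Monotone fibChain := by
  intro a b hab
  have hω := goldenMean_pos.le
  unfold fibChain
  gcongr

lemma monotone_orbitPoint (n : ℕ) : Monotone (orbitPoint n) :=
  monotone_fibChain.const_mul (goldenMean_pow_pos n).le

lemma goldenMean_pow_le_orbitPoint (n : ℕ) {k : ℕ} (hk : 1 ≤ k) : ω ^ n ≤ orbitPoint n k :=
  le_mul_of_one_le_right (goldenMean_pow_pos n).le (one_le_fibChain hk)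

lemma orbitPoint_pos (n : ℕ) {k : ℕ} (hk : 1 ≤ k) : 0 < orbitPoint n k :=
  (goldenMean_pow_pos n).trans_le (goldenMean_pow_le_orbitPoint n hk)

lemma mul_mod_pos {p q k : ℕ} (hpq : q.Coprime p) (hk : 1 ≤ k) (hkq : k < q) :
    0 < k * p % q := by
  rw [Nat.pos_iff_ne_zero]
  intro h
  have hdvd : q ∣ k := hpq.dvd_of_dvd_mul_right (Nat.dvd_of_mod_eq_zero h)
  exact (Nat.le_of_dvd hk hdvd).not_gt hkq

lemma sub_mul_mod {p q k : ℕ} (hpq : q.Coprime p) (hk : 1 ≤ k) (hkq : k < q) :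
    (q - k) * p % q = q - k * p % q := by
  have hlt := Nat.mod_lt (k * p) (Nat.zero_lt_of_lt hkq)
  have hpos := mul_mod_pos hpq hk hkq
  refine Nat.ModEq.eq_of_lt_of_lt (m := q) ?_ (Nat.mod_lt _ (by omega)) (by omega)
  refine (Nat.mod_modEq _ _).trans (Nat.ModEq.add_right_cancel' (k * p) ?_)
  calc (q - k) * p + k * p = q * p := by rw [← add_mul, Nat.sub_add_cancel hkq.le]
    _ ≡ q - k * p % q + k * p % q [MOD q] := by
      rw [Nat.sub_add_cancel hlt.le]
      simp [Nat.ModEq]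
    _ ≡ q - k * p % q + k * p [MOD q] := (Nat.mod_modEq _ _).add_left _

lemma sum_Ico_mul_mod {M : Type*} [AddCommMonoid M] {p q : ℕ} (hpq : q.Coprime p) (f : ℕ → M) :
    ∑ k ∈ Ico 1 q, f (k * p % q) = ∑ k ∈ Ico 1 q, f k := by
  have hmaps : Set.MapsTo (fun k => k * p % q) (Ico 1 q) (Ico 1 q) := fun k hk => by
    rw [mem_coe, mem_Ico] at hk ⊢
    exact ⟨mul_mod_pos hpq hk.1 hk.2, Nat.mod_lt _ (Nat.zero_lt_of_lt hk.2)⟩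
  have hinj : Set.InjOn (fun k => k * p % q) (Ico 1 q) := fun a ha b hb hab => by
    rw [mem_coe, mem_Ico] at ha hb
    have hmod : a ≡ b [MOD q] := Nat.ModEq.cancel_right_of_coprime (c := p) hpq hab
    exact hmod.eq_of_lt_of_lt ha.2 hb.2
  exact sum_nbij _ hmaps hinj (surjOn_of_injOn_of_card_le _ hmaps hinj le_rfl) fun _ _ => rfl

lemma fib_coprime (n : ℕ) : (fib (n + 1)).Coprime (fib n) := (Nat.fib_coprime_fib_succ n).symm

lemma fib_succ_pos (n : ℕ) : 0 < fib (n + 1) := Nat.fib_pos.2 n.succ_pos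

lemma natCast_mul_fib (n k : ℕ) : (k : ℝ) * fib n =
    fib (n + 1) * (k * fib n / fib (n + 1) : ℕ) + (k * fib n % fib (n + 1) : ℕ) := by
  exact_mod_cast (Nat.div_add_mod (k * fib n) (fib (n + 1))).symm

/-- `ω` and its convergent `fib n / fib (n + 1)` are too close to separate `k ω` from
`k * fib n / fib (n + 1)` by an integer. -/
lemma floor_mul_goldenMean {n k : ℕ} (hk : 1 ≤ k) (hkq : k < fib (n + 1)) :
    ⌊k * ω⌋₊ = k * fib n / fib (n + 1) := by
  have hdm := natCast_mul_fib n k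
  set q := fib (n + 1)
  set r := k * fib n % q
  set j := k * fib n / q
  have hq0 : (0 : ℝ) < q := mod_cast fib_succ_pos n
  have hr1 : (1 : ℝ) ≤ r := mod_cast mul_mod_pos (fib_coprime n) hk hkq
  have hr2 : (r : ℝ) + 1 ≤ q := mod_cast Nat.mod_lt _ (fib_succ_pos n)
  have herr : |k * ((-1) ^ n * ω ^ (n + 1))| < 1 := by
    rw [abs_mul, abs_mul, abs_neg_one_pow, one_mul, Nat.abs_cast, abs_of_pos (goldenMean_pow_pos _)]
    calc k * ω ^ (n + 1) ≤ k * ω ^ n :=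
          mul_le_mul_of_nonneg_left (goldenMean_pow_le_pow n.le_succ) (Nat.cast_nonneg k)
      _ < q * ω ^ n := mul_lt_mul_of_pos_right (Nat.cast_lt.2 hkq) (goldenMean_pow_pos n)
      _ ≤ 1 := fib_succ_mul_goldenMean_pow_le_one n
  have hkω : q * (k * ω) = q * j + (r + k * ((-1) ^ n * ω ^ (n + 1))) := by
    linear_combination (k : ℝ) * fib_succ_mul_goldenMean n + hdm
  rw [abs_lt] at herr
  rw [Nat.floor_eq_iff (mul_nonneg (Nat.cast_nonneg k) goldenMean_pos.le)]
  constructor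
  · exact le_of_mul_le_mul_left (by linarith) hq0
  · exact lt_of_mul_lt_mul_left (by linarith) hq0.le

section OrbitPoint

variable {n k : ℕ} (hk : 1 ≤ k) (hkq : k < fib (n + 1))
include hk hkq

lemma orbitPoint_mul_fib :
    orbitPoint n k * fib (n + 1) = k - ω ^ (n + 1) * (k * fib n % fib (n + 1) : ℕ) := by
  rw [orbitPoint, fibChain, floor_mul_goldenMean hk hkq]
  linear_combination k * goldenMean_pow_mul_fib n - ω ^ (n + 1) * natCast_mul_fib n k

lemma orbitPoint_fib_sub :
    orbitPoint n (fib (n + 1) - k) = 1 - ω ^ (n + 1) - orbitPoint n k := by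
  have hq : (fib (n + 1) : ℝ) ≠ 0 := mod_cast (fib_succ_pos n).ne'
  have hk' := orbitPoint_mul_fib hk hkq
  have hqk := orbitPoint_mul_fib (n := n) (k := fib (n + 1) - k) (by omega) (by omega)
  rw [sub_mul_mod (fib_coprime n) hk hkq, Nat.cast_sub hkq.le,
    Nat.cast_sub (Nat.mod_lt _ (fib_succ_pos n)).le] at hqk
  apply mul_right_cancel₀ hq
  linear_combination hqk + hk'

lemma orbitPoint_le : orbitPoint n k ≤ 1 - ω ^ (n + 1) - ω ^ n := by
  have h := goldenMean_pow_le_orbitPoint n (k := fib (n + 1) - k) (by omega)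
  rw [orbitPoint_fib_sub hk hkq] at h
  linarith

lemma exists_int_mul_fib_mod_mul_goldenMean :
    ∃ z : ℤ, (k * fib n % fib (n + 1) : ℕ) * ω = z - (-1) ^ n * orbitPoint n k := by
  obtain ⟨z, hz⟩ := exists_int_fib_mul_goldenMean n
  refine ⟨k * z - (k * fib n / fib (n + 1) : ℕ) * fib n, ?_⟩
  rw [orbitPoint, fibChain, floor_mul_goldenMean hk hkq]
  set j := k * fib n / fib (n + 1)
  push_cast
  linear_combination k * hz - ω * natCast_mul_fib n k - j * fib_succ_mul_goldenMean n

end OrbitPoint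

lemma logSudler_fib_pred (n : ℕ) (x : ℝ) :
    logSudler ω (fib (n + 1) - 1) ((-1) ^ n * x) =
      ∑ k ∈ Ico 1 (fib (n + 1)), logChord (orbitPoint n k - x) := by
  rw [logSudler_eq_sum_Ico, Nat.sub_add_cancel (fib_succ_pos n),
    ← sum_Ico_mul_mod (fib_coprime n) fun r => logChord (r * ω + (-1) ^ n * x)]
  refine sum_congr rfl fun k hk => ?_
  rw [mem_Ico] at hk
  obtain ⟨z, hz⟩ := exists_int_mul_fib_mod_mul_goldenMean hk.1 hk.2
  rw [← logChord_neg (orbitPoint n k - x), ← logChord_neg_one_pow_mul n (-_)]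
  exact logChord_congr z (by rw [hz]; ring)

lemma logSudler_fib (n : ℕ) (x : ℝ) :
    logSudler ω (fib (n + 1)) ((-1) ^ n * x) =
      logChord (ω ^ (n + 1) + x) + ∑ k ∈ Ico 1 (fib (n + 1)), logChord (orbitPoint n k - x) := by
  obtain ⟨m, hm⟩ : ∃ m, fib (n + 1) = m + 1 := ⟨_, (Nat.sub_add_cancel (fib_succ_pos n)).symm⟩
  have hlast : logChord (fib (n + 1) * ω + (-1) ^ n * x) = logChord (ω ^ (n + 1) + x) := by
    rw [← logChord_neg_one_pow_mul n (ω ^ (n + 1) + x)]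
    refine logChord_congr (fib n) ?_
    rw [fib_succ_mul_goldenMean, Int.cast_natCast]
    ring
  rw [← logSudler_fib_pred, ← hlast, hm, Nat.add_sub_cancel, logSudler_succ, add_comm]

lemma sum_orbitPoint_reflect (n : ℕ) (f : ℝ → ℝ) :
    ∑ k ∈ Ico 1 (fib (n + 1)), f (1 - ω ^ (n + 1) - orbitPoint n k) =
      ∑ k ∈ Ico 1 (fib (n + 1)), f (orbitPoint n k) := by
  have h := sum_Ico_reflect (fun k => f (orbitPoint n k)) 1 (fib (n + 1)).le_succ
  rw [Nat.add_sub_cancel_left, Nat.add_sub_cancel] at h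
  rw [← h]
  refine sum_congr rfl fun k hk => ?_
  rw [mem_Ico] at hk
  rw [orbitPoint_fib_sub hk.1 hk.2]

/-! ### Fibonacci blocks and their recurrence -/

/-- The logarithm of the Sudler product of length `fib (n + 1)`. -/
noncomputable def fibLogSudler (n : ℕ) : ℝ := logSudler ω (fib (n + 1)) 0

/-- The logarithm of the Sudler product of length `fib (n + 1) - 1`, which omits the smallest
factor of `fibLogSudler n`. -/
noncomputable def fibPredLogSudler (n : ℕ) : ℝ := logSudler ω (fib (n + 1) - 1) 0

/-- The relative change of the product of the two factors belonging to the `k`-th orbit point and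
to its mirror image when the orbit points are shifted by `ω ^ (n + 2)`. -/
noncomputable def shiftRatio (n k : ℕ) : ℝ :=
  sin (π * ω ^ (n + 2)) * sin (π * ω ^ (n + 3)) /
    (sin (π * orbitPoint n k) * sin (π * (orbitPoint n k + ω ^ (n + 1))))

/-- The contribution of the `k`-th orbit point and of its mirror image to the change of
`fibPredLogSudler n` when the orbit points are shifted by `ω ^ (n + 2)`. -/
noncomputable def shiftCorrection (n k : ℕ) : ℝ := log (1 + shiftRatio n k)

/-- The change of `fibPredLogSudler n` when the orbit points are shifted by `ω ^ (n + 2)`. -/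
noncomputable def shiftDefect (n : ℕ) : ℝ :=
  (∑ k ∈ Ico 1 (fib (n + 1)), shiftCorrection n k) / 2

/-- The inhomogeneity of the Fibonacci-type recurrence satisfied by `fibLogSudler`. -/
noncomputable def recurrenceDefect (n : ℕ) : ℝ :=
  logChord (ω ^ (n + 1)) - logChord (ω ^ (n + 3)) - shiftDefect n

lemma fibPredLogSudler_eq_sum (n : ℕ) :
    fibPredLogSudler n = ∑ k ∈ Ico 1 (fib (n + 1)), logChord (orbitPoint n k) := by
  simpa only [fibPredLogSudler, mul_zero, sub_zero] using logSudler_fib_pred n 0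

lemma fibLogSudler_eq_add (n : ℕ) :
    fibLogSudler n = logChord (ω ^ (n + 1)) + fibPredLogSudler n := by
  rw [fibPredLogSudler_eq_sum]
  simpa only [fibLogSudler, mul_zero, sub_zero, add_zero] using logSudler_fib n 0

lemma two_mul_sum_logChord_orbitPoint_add (n : ℕ) {a b : ℝ} (hab : a + b = ω ^ (n + 1)) :
    2 * ∑ k ∈ Ico 1 (fib (n + 1)), logChord (orbitPoint n k + a) =
      ∑ k ∈ Ico 1 (fib (n + 1)),
        (logChord (orbitPoint n k + a) + logChord (orbitPoint n k + b)) := by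
  rw [two_mul, sum_add_distrib, ← sum_orbitPoint_reflect n fun x => logChord (x + b)]
  refine congrArg (_ + ·) (sum_congr rfl fun k _ => ?_)
  rw [← logChord_one_sub]
  congr 1
  linear_combination -hab

lemma sin_goldenMean_pow_pos {n : ℕ} (hn : n ≠ 0) : 0 < sin (π * ω ^ n) :=
  sin_pi_mul_pos (goldenMean_pow_pos n) (goldenMean_pow_lt_one hn)

section Shift

variable {n k : ℕ} (hk : 1 ≤ k) (hkq : k < fib (n + 1))
include hk hkq

lemma sin_orbitPoint_pos : 0 < sin (π * orbitPoint n k) :=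
  sin_pi_mul_pos (orbitPoint_pos n hk)
    (by linarith [orbitPoint_le hk hkq, goldenMean_pow_pos n, goldenMean_pow_pos (n + 1)])

lemma sin_orbitPoint_add_pos : 0 < sin (π * (orbitPoint n k + ω ^ (n + 1))) :=
  sin_pi_mul_pos (add_pos (orbitPoint_pos n hk) (goldenMean_pow_pos _))
    (by linarith [orbitPoint_le hk hkq, goldenMean_pow_pos n])

lemma logChord_orbitPoint_add_logChord :
    logChord (orbitPoint n k + ω ^ (n + 2)) + logChord (orbitPoint n k + ω ^ (n + 3)) =
      logChord (orbitPoint n k) + logChord (orbitPoint n k + ω ^ (n + 1)) +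
        shiftCorrection n k := by
  have hlow := goldenMean_pow_le_orbitPoint n hk
  have hhigh := orbitPoint_le hk hkq
  have hpos2 := goldenMean_pow_pos (n + 2)
  have hpos3 := goldenMean_pow_pos (n + 3)
  have hrec : ω ^ (n + 2) = ω ^ n - ω ^ (n + 1) := goldenMean_pow_add_two n
  have hrec' : ω ^ (n + 3) = ω ^ (n + 1) - ω ^ (n + 2) := goldenMean_pow_add_two (n + 1)
  have hsin0 := sin_orbitPoint_pos hk hkq
  have hsin1 := sin_orbitPoint_add_pos hk hkq
  have hsin2 := sin_goldenMean_pow_pos (n + 1).succ_ne_zero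
  have hsin3 := sin_goldenMean_pow_pos (n + 2).succ_ne_zero
  rw [logChord_add_logChord (by linarith) (by linarith) (by linarith) (by linarith),
    logChord_add_logChord (by linarith) (by linarith) (by linarith) (by linarith),
    shiftCorrection, shiftRatio, ← log_mul (by positivity) (by positivity), mul_add π, mul_add π,
    sin_add_mul_sin_add, ← mul_add, ← mul_add,
    show ω ^ (n + 2) + ω ^ (n + 3) = ω ^ (n + 1) by linarith]
  congr 1
  field_simp

end Shift

lemma sum_logChord_orbitPoint_add (n : ℕ) :
    ∑ k ∈ Ico 1 (fib (n + 1)), logChord (orbitPoint n k + ω ^ (n + 2)) =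
      fibPredLogSudler n + shiftDefect n := by
  have hshift := two_mul_sum_logChord_orbitPoint_add n (a := ω ^ (n + 2)) (b := ω ^ (n + 3))
    (by linarith [show ω ^ (n + 3) = ω ^ (n + 1) - ω ^ (n + 2) from goldenMean_pow_add_two _])
  have hzero := two_mul_sum_logChord_orbitPoint_add n (zero_add (ω ^ (n + 1)))
  simp only [add_zero] at hzero
  rw [sum_congr rfl fun k hk => logChord_orbitPoint_add_logChord (mem_Ico.1 hk).1 (mem_Ico.1 hk).2,
    sum_add_distrib, ← hzero, ← fibPredLogSudler_eq_sum] at hshift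
  rw [shiftDefect]
  linarith

lemma fibLogSudler_add_two (n : ℕ) :
    fibLogSudler (n + 2) = fibLogSudler (n + 1) + fibLogSudler n - recurrenceDefect n := by
  have hsplit : fibLogSudler (n + 2) =
      fibLogSudler (n + 1) + logSudler ω (fib (n + 1)) ((-1) ^ n * -ω ^ (n + 2)) := by
    have hshift := logSudler_add_fib_mul (fib (n + 1)) (n + 1) 0
    rw [fibLogSudler, fibLogSudler, show fib (n + 2 + 1) = fib (n + 2) + fib (n + 1) by
      rw [fib_add_two (n := n + 1), add_comm], logSudler_add, hshift]
    congr 2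
    ring
  have hsum := sum_logChord_orbitPoint_add n
  simp only [logSudler_fib, sub_neg_eq_add] at hsplit
  rw [hsplit, hsum, fibLogSudler_eq_add n, recurrenceDefect,
    show ω ^ (n + 3) = ω ^ (n + 1) - ω ^ (n + 2) from goldenMean_pow_add_two _]
  ring_nf

/-! ### Lower bounds by Fibonacci blocks -/

lemma concaveOn_sum {ι : Type*} {s : Set ℝ} {t : Finset ι} {f : ι → ℝ → ℝ} (hs : Convex ℝ s)
    (hf : ∀ i ∈ t, ConcaveOn ℝ s (f i)) : ConcaveOn ℝ s fun x => ∑ i ∈ t, f i x := by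
  rw [← sum_fn]
  exact sum_induction f (ConcaveOn ℝ s) (fun _ _ => ConcaveOn.add) (concaveOn_const 0 hs) hf

lemma concaveOn_logSudler_fib {n : ℕ} (hn : n ≠ 0) :
    ConcaveOn ℝ (Set.Icc (-ω ^ (n + 3)) (ω ^ (n + 2)))
      fun x => logSudler ω (fib (n + 1)) ((-1) ^ n * x) := by
  have hrec : ω ^ (n + 2) = ω ^ n - ω ^ (n + 1) := goldenMean_pow_add_two n
  have hlt : ω ^ n < 1 := goldenMean_pow_lt_one hn
  have hrec' : ω ^ (n + 3) = ω ^ (n + 1) - ω ^ (n + 2) := goldenMean_pow_add_two _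
  have hpos := goldenMean_pow_pos (n + 1)
  have hpos' := goldenMean_pow_pos (n + 2)
  simp only [logSudler_fib]
  refine ConcaveOn.add ?_ ?_
  · refine (concaveOn_logChord_sub (y := 1 - ω ^ (n + 1)) (by linarith) (by linarith)).congr
      fun x _ => ?_
    change logChord (1 - ω ^ (n + 1) - x) = logChord (ω ^ (n + 1) + x)
    rw [← logChord_one_sub]
    ring_nf
  · refine concaveOn_sum (convex_Icc _ _) fun k hk => ?_
    rw [mem_Ico] at hk
    have hlow := goldenMean_pow_le_orbitPoint n hk.1
    have hhigh := orbitPoint_le hk.1 hk.2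
    exact concaveOn_logChord_sub (by linarith) (by linarith)

lemma logSudler_neg_one_pow_mul {M N n : ℕ} (h : M + N + 1 = fib (n + 1)) :
    logSudler ω N ((-1) ^ (n + 1) * ω ^ (n + 1)) = logSudler ω (M + N) 0 - logSudler ω M 0 := by
  rw [← logSudler_neg_mul, h]
  refine logSudler_congr ω N (fib n) ?_
  have hfib := fib_succ_mul_goldenMean n
  rw [Int.cast_natCast, hfib]
  ring

lemma logSudler_fib_left (n : ℕ) :
    logSudler ω (fib (n + 1)) ((-1) ^ n * -ω ^ (n + 3)) =
      fibPredLogSudler (n + 2) - fibPredLogSudler (n + 1) := by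
  have hfib : fib (n + 3) = fib (n + 1) + fib (n + 2) := fib_add_two
  have hpos : 0 < fib (n + 2) := fib_succ_pos (n + 1)
  have h := logSudler_neg_one_pow_mul (M := fib (n + 2) - 1) (N := fib (n + 1)) (n := n + 2)
    (show _ = fib (n + 3) by omega)
  rw [show fib (n + 2) - 1 + fib (n + 1) = fib (n + 3) - 1 by omega] at h
  rw [fibPredLogSudler, fibPredLogSudler, ← h]
  congr 1
  ring

lemma logSudler_fib_right (n : ℕ) :
    logSudler ω (fib (n + 2)) ((-1) ^ (n + 1) * ω ^ (n + 3)) =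
      fibPredLogSudler (n + 2) - fibPredLogSudler n := by
  have hfib : fib (n + 3) = fib (n + 1) + fib (n + 2) := fib_add_two
  have hpos := fib_succ_pos n
  have h := logSudler_neg_one_pow_mul (M := fib (n + 1) - 1) (N := fib (n + 2)) (n := n + 2)
    (show _ = fib (n + 3) by omega)
  rw [show fib (n + 1) - 1 + fib (n + 2) = fib (n + 3) - 1 by omega] at h
  rw [fibPredLogSudler, fibPredLogSudler, ← h]
  congr 1
  ring

section Monotone

variable (hmono : Monotone fibPredLogSudler)
include hmono

lemma logSudler_fib_nonneg (n : ℕ) {x : ℝ} (h0 : -ω ^ (n + 4) ≤ x) (h1 : x ≤ ω ^ (n + 3)) :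
    0 ≤ logSudler ω (fib (n + 2)) ((-1) ^ (n + 1) * x) := by
  have hmem : x ∈ Set.Icc (-ω ^ (n + 4)) (ω ^ (n + 3)) := ⟨h0, h1⟩
  have hle := h0.trans h1
  refine le_trans (le_min ?_ ?_) ((concaveOn_logSudler_fib n.succ_ne_zero).min_le_of_mem_Icc
    (Set.left_mem_Icc.2 hle) (Set.right_mem_Icc.2 hle) hmem)
  · rw [logSudler_fib_left (n + 1)]
    exact sub_nonneg.2 (hmono (by omega))
  · rw [logSudler_fib_right n]
    exact sub_nonneg.2 (hmono (by omega))

/-- Peeling off the Zeckendorf blocks of `N`, largest first: each one contributes nonnegatively,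
and the shift it leaves behind is admissible for the next. -/
lemma logSudler_nonneg_of_lt_fib (a N : ℕ) (hN : N < fib (a + 1)) (x : ℝ)
    (h0 : -ω ^ (a + 2) ≤ x) (h1 : x ≤ ω ^ (a + 1)) :
    0 ≤ logSudler ω N ((-1) ^ (a + 1) * x) := by
  induction a using Nat.twoStepInduction generalizing N x with
  | zero | one => rw [Nat.lt_one_iff.1 hN, logSudler_zero]
  | more a ih0 ih1 =>
    have hrec : ω ^ (a + 3) = ω ^ (a + 1) - ω ^ (a + 2) := goldenMean_pow_add_two (a + 1)
    have hrec' : ω ^ (a + 4) = ω ^ (a + 2) - ω ^ (a + 3) := goldenMean_pow_add_two (a + 2)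
    have hpos := goldenMean_pow_pos (a + 4)
    have hpos' := goldenMean_pow_pos (a + 3)
    have hfib : fib (a + 2 + 1) = fib (a + 1) + fib (a + 2) := fib_add_two
    rcases lt_or_ge N (fib (a + 2)) with hlt | hge
    · have h := ih1 N hlt (-x) (by linarith) (by linarith)
      rwa [show (-1 : ℝ) ^ (a + 1 + 1) * -x = (-1) ^ (a + 3) * x by ring] at h
    · obtain ⟨M, rfl⟩ := Nat.exists_eq_add_of_le hge
      have hblock := logSudler_fib_nonneg hmono a h0 h1
      have hrest := ih0 M (by omega) (x + ω ^ (a + 2)) (by linarith) (by linarith)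
      rw [show (-1 : ℝ) ^ (a + 2 + 1) * x = (-1) ^ (a + 1) * x by ring, logSudler_add,
        logSudler_add_fib_mul, ← mul_add]
      exact add_nonneg hblock hrest

lemma fibLogSudler_le_logSudler {n N : ℕ} (h0 : fib (n + 1) ≤ N) (h1 : N < fib (n + 2)) :
    fibLogSudler n ≤ logSudler ω N 0 := by
  obtain ⟨M, rfl⟩ := Nat.exists_eq_add_of_le h0
  rw [logSudler_add, fibLogSudler, le_add_iff_nonneg_right]
  cases n with
  | zero =>
    have hM : M = 0 := by
      rw [zero_add, Nat.fib_one, Nat.fib_two] at h1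
      omega
    rw [hM, logSudler_zero]
  | succ n =>
    have hfib : fib (n + 1 + 2) = fib (n + 1) + fib (n + 1 + 1) := fib_add_two
    have hpos := goldenMean_pow_pos (n + 2)
    have h := logSudler_nonneg_of_lt_fib hmono n M (by omega) (ω ^ (n + 2)) (by linarith)
      (goldenMean_pow_le_pow (by omega))
    rwa [logSudler_add_fib_mul, zero_add]

end Monotone

/-! ### Growth of the Fibonacci blocks -/

section Growth

variable {n k : ℕ} (hk : 1 ≤ k) (hkq : k < fib (n + 1))
include hk hkq

lemma orbitPoint_le_div_fib : orbitPoint n k ≤ k / fib (n + 1) := by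
  have hq : (0 : ℝ) < fib (n + 1) := mod_cast fib_succ_pos n
  rw [le_div_iff₀ hq, orbitPoint_mul_fib hk hkq]
  exact sub_le_self _ (mul_nonneg (goldenMean_pow_pos _).le (Nat.cast_nonneg _))

lemma div_fib_le_orbitPoint_add : (k / fib (n + 1) : ℝ) ≤ orbitPoint n k + ω ^ (n + 1) := by
  have hq : (0 : ℝ) < fib (n + 1) := mod_cast fib_succ_pos n
  have hmod : ((k * fib n % fib (n + 1) : ℕ) : ℝ) ≤ fib (n + 1) :=
    mod_cast (Nat.mod_lt _ (fib_succ_pos n)).le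
  rw [div_le_iff₀ hq, add_mul, orbitPoint_mul_fib hk hkq]
  linarith [mul_le_mul_of_nonneg_left hmod (goldenMean_pow_pos (n + 1)).le]

lemma logChord_div_fib_sub_inv_le :
    logChord (k / fib (n + 1)) - (k : ℝ)⁻¹ ≤ logChord (orbitPoint n k) := by
  have hq : (0 : ℝ) < fib (n + 1) := mod_cast fib_succ_pos n
  have : (0 : ℝ) < k := mod_cast hk
  have hX := orbitPoint_pos n hk
  have hgap : (k / fib (n + 1) - orbitPoint n k) / orbitPoint n k ≤ (k : ℝ)⁻¹ := by
    rw [div_le_iff₀ hX]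
    calc k / fib (n + 1) - orbitPoint n k ≤ ω ^ (n + 1) := by
          linarith [div_fib_le_orbitPoint_add hk hkq]
      _ ≤ ω ^ n := goldenMean_pow_le_pow n.le_succ
      _ = (k : ℝ)⁻¹ * (ω ^ n * k) := by field_simp
      _ ≤ (k : ℝ)⁻¹ * orbitPoint n k := mul_le_mul_of_nonneg_left
          (mul_le_mul_of_nonneg_left (natCast_le_fibChain k) (goldenMean_pow_pos n).le)
          (by positivity)
  linarith [logChord_sub_div_le hX (orbitPoint_le_div_fib hk hkq)
    ((div_lt_one hq).2 (Nat.cast_lt.2 hkq))]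

lemma logChord_orbitPoint_le_add_inv :
    logChord (orbitPoint n k) ≤ logChord (k / fib (n + 1)) + ((fib (n + 1) - k : ℕ) : ℝ)⁻¹ := by
  have hupper := orbitPoint_le_div_fib hk hkq
  have hclose := div_fib_le_orbitPoint_add hk hkq
  have hpow := fib_succ_mul_goldenMean_pow_le_one n
  have hX := orbitPoint_pos n hk
  rw [Nat.cast_sub hkq.le]
  set q : ℝ := ((fib (n + 1) : ℕ) : ℝ)
  have hkq' : (k : ℝ) < q := Nat.cast_lt.2 hkq
  have hq : 0 < q := hkq'.trans_le' (Nat.cast_nonneg k)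
  have hlt : k / q < 1 := (div_lt_one hq).2 hkq'
  have hgap : (1 - orbitPoint n k - (1 - k / q)) / (1 - k / q) ≤ (q - k)⁻¹ := by
    rw [div_le_iff₀ (by linarith)]
    calc 1 - orbitPoint n k - (1 - k / q) ≤ ω ^ (n + 1) := by linarith
      _ ≤ ω ^ n := goldenMean_pow_le_pow n.le_succ
      _ ≤ q⁻¹ := by rwa [← one_div, le_div_iff₀' hq]
      _ = (q - k)⁻¹ * (1 - k / q) := by
        have hne : q - k ≠ 0 := by linarith
        field_simp
  have h := logChord_sub_div_le (x := 1 - k / q) (y := 1 - orbitPoint n k) (by linarith)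
    (by linarith) (by linarith)
  rw [logChord_one_sub, logChord_one_sub] at h
  linarith

end Growth

lemma sum_Ico_inv_le (q : ℕ) : ∑ k ∈ Ico 1 q, (k : ℝ)⁻¹ ≤ 1 + log q := by
  refine le_trans ?_ (harmonic_le_one_add_log q)
  rw [harmonic_eq_sum_Icc]
  push_cast
  exact sum_le_sum_of_subset_of_nonneg Ico_subset_Icc_self fun _ _ _ => by positivity

lemma log_fib_succ_le (n : ℕ) : log (fib (n + 1)) ≤ n := by
  have hq : (0 : ℝ) < fib (n + 1) := mod_cast fib_succ_pos n
  have h := log_le_log (mul_pos hq (goldenMean_pow_pos n)) (fib_succ_mul_goldenMean_pow_le_one n)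
  rw [log_mul hq.ne' (goldenMean_pow_pos n).ne', log_pow, log_one] at h
  have hlog : n * -1 ≤ n * log ω :=
    mul_le_mul_of_nonneg_left (by linarith [le_log_goldenMean]) (Nat.cast_nonneg n)
  linarith

lemma abs_fibPredLogSudler_le (n : ℕ) : |fibPredLogSudler n| ≤ 2 * n + 1 := by
  have hinv := sum_Ico_inv_le (fib (n + 1))
  have hlog := log_fib_succ_le n
  have hsum := sum_logChord_div (fib_succ_pos n)
  have hlow : ∑ k ∈ Ico 1 (fib (n + 1)), (logChord (k / fib (n + 1)) - (k : ℝ)⁻¹) ≤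
      fibPredLogSudler n := by
    rw [fibPredLogSudler_eq_sum]
    refine sum_le_sum fun k hk => ?_
    rw [mem_Ico] at hk
    exact logChord_div_fib_sub_inv_le hk.1 hk.2
  have hupp : fibPredLogSudler n ≤ ∑ k ∈ Ico 1 (fib (n + 1)),
      (logChord (k / fib (n + 1)) + ((fib (n + 1) - k : ℕ) : ℝ)⁻¹) := by
    rw [fibPredLogSudler_eq_sum]
    refine sum_le_sum fun k hk => ?_
    rw [mem_Ico] at hk
    exact logChord_orbitPoint_le_add_inv hk.1 hk.2
  have hreflect := sum_Ico_reflect (fun k : ℕ => (k : ℝ)⁻¹) 1 (fib (n + 1)).le_succ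
  rw [Nat.add_sub_cancel_left, Nat.add_sub_cancel] at hreflect
  rw [sum_sub_distrib, hsum] at hlow
  rw [sum_add_distrib, hreflect, hsum] at hupp
  rw [abs_le]
  constructor <;> linarith [log_natCast_nonneg (fib (n + 1))]

lemma abs_logChord_goldenMean_pow_le (n : ℕ) : |logChord (ω ^ (n + 2))| ≤ n + 2 := by
  have hpos := goldenMean_pow_pos (n + 2)
  have hhalf : ω ^ (n + 2) ≤ 1 / 2 := by
    linarith [goldenMean_pow_le_pow (show 2 ≤ n + 2 by omega), goldenMean_sq, lt_goldenMean]
  have hlow := log_le_logChord hpos hhalf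
  have hupp := logChord_le_log_two hpos (by linarith)
  have hlog : (n + 2) * -1 ≤ (n + 2) * log ω :=
    mul_le_mul_of_nonneg_left (by linarith [le_log_goldenMean]) (by positivity)
  rw [log_pow] at hlow
  push_cast at hlow
  rw [abs_le]
  constructor <;> linarith [log_two_lt_d9, Nat.cast_nonneg (α := ℝ) n]

lemma tendsto_goldenMean_pow_mul_fibLogSudler :
    Tendsto (fun n => ω ^ n * fibLogSudler n) atTop (𝓝 0) := by
  have hn := tendsto_self_mul_const_pow_of_lt_one goldenMean_pos.le goldenMean_lt_one
  have hbound : Tendsto (fun n : ℕ => 3 * ((n : ℝ) * ω ^ n) + 2 * ω ^ n) atTop (𝓝 0) := by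
    simpa only [mul_zero, add_zero] using
      (hn.const_mul 3).add (tendsto_goldenMean_pow.const_mul 2)
  refine squeeze_zero_norm' ?_ hbound
  filter_upwards [eventually_ge_atTop 1] with n hn1
  obtain ⟨m, rfl⟩ := Nat.exists_eq_add_of_le' hn1
  have hU : |fibLogSudler (m + 1)| ≤ 3 * (m + 1 : ℕ) + 2 := by
    rw [fibLogSudler_eq_add]
    refine (abs_add_le _ _).trans ?_
    have h := abs_fibPredLogSudler_le (m + 1)
    push_cast at h ⊢
    linarith [abs_logChord_goldenMean_pow_le m]
  rw [norm_eq_abs, abs_mul, abs_of_pos (goldenMean_pow_pos _)]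
  linarith [mul_le_mul_of_nonneg_left hU (goldenMean_pow_pos (m + 1)).le]

/-! ### Subexponential solutions of the recurrence -/

lemma tendsto_zero_of_abs_succ_le {r : ℝ} {v e : ℕ → ℝ} (hr0 : 0 ≤ r) (hr1 : r < 1)
    (he : Tendsto e atTop (𝓝 0)) (hv : ∀ n, |v (n + 1)| ≤ r * |v n| + e n) :
    Tendsto v atTop (𝓝 0) := by
  rw [Metric.tendsto_atTop']
  intro ε hε
  have hε' : 0 < ε / 2 * (1 - r) := mul_pos (by positivity) (by linarith)
  obtain ⟨N, hN⟩ := (he.eventually_le_const hε').exists_forall_of_atTop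
  have hiter (j : ℕ) : |v (N + j)| ≤ r ^ j * |v N| + ε / 2 := by
    induction j with
    | zero => simpa using (half_pos hε).le
    | succ j ih =>
      calc |v (N + j + 1)| ≤ r * |v (N + j)| + e (N + j) := hv _
        _ ≤ r * (r ^ j * |v N| + ε / 2) + ε / 2 * (1 - r) :=
          add_le_add (mul_le_mul_of_nonneg_left ih hr0) (hN _ (by omega))
        _ = r ^ (j + 1) * |v N| + ε / 2 := by ring
  have hdecay : Tendsto (fun j : ℕ => r ^ j * |v N|) atTop (𝓝 0) := by
    simpa only [zero_mul] using
      (tendsto_pow_atTop_nhds_zero_of_lt_one hr0 hr1).mul_const |v N|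
  obtain ⟨J, hJ⟩ := (hdecay.eventually_lt_const (half_pos hε)).exists_forall_of_atTop
  refine ⟨N + J, fun n hn => ?_⟩
  obtain ⟨j, rfl⟩ := Nat.exists_eq_add_of_le (show N ≤ n by omega)
  rw [dist_zero_right, norm_eq_abs]
  linarith [hiter j, hJ j (by omega)]

section Recurrence

variable {u c : ℕ → ℝ} (hrec : ∀ n, u (n + 2) = u (n + 1) + u n - c n)
include hrec

lemma goldenMean_mul_succ_add (n : ℕ) :
    ω * (u (n + 2) + ω * u (n + 1)) = u (n + 1) + ω * u n - ω * c n := by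
  rw [hrec]
  linear_combination u (n + 1) * goldenMean_sq

lemma succ_sub_add_two (n : ℕ) :
    u (n + 3) - (1 + ω) * u (n + 2) =
      ω ^ 2 * (u (n + 1) - (1 + ω) * u n) + (ω * c n - c (n + 1)) := by
  rw [hrec (n + 1), hrec n]
  linear_combination (ω * u n - u (n + 1)) * goldenMean_sq

lemma succ_sub_le_of_le {n : ℕ} {a b C : ℝ} (hc : ∀ j ≥ n, a ≤ c j ∧ c j ≤ b)
    (hC : b * ω - a ≤ C * ω)
    (h0 : u (n + 1) - (1 + ω) * u n ≤ C) (h1 : u (n + 2) - (1 + ω) * u (n + 1) ≤ C) :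
    ∀ j ≥ n, u (j + 1) - (1 + ω) * u j ≤ C := by
  intro j hj
  obtain ⟨i, rfl⟩ := Nat.exists_eq_add_of_le hj
  clear hj
  induction i using Nat.twoStepInduction with
  | zero => exact h0
  | one => exact h1
  | more i ih _ =>
    have hlow := (hc (n + i + 1) (by omega)).1
    have hupp := mul_le_mul_of_nonneg_left (hc (n + i) (by omega)).2 goldenMean_pos.le
    have hCω : ω ^ 2 * C + ω * C = C := by linear_combination C * goldenMean_sq
    have hih := mul_le_mul_of_nonneg_left ih (sq_nonneg ω)
    have hstep := succ_sub_add_two hrec (n + i)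
    change u (n + i + 3) - (1 + ω) * u (n + i + 2) ≤ C
    linarith

section Subexponential

variable (hu : Tendsto (fun n => ω ^ n * u n) atTop (𝓝 0))
include hu

lemma mul_le_succ_add {n : ℕ} {C : ℝ} (hC : ∀ j ≥ n, C ≤ c j) :
    C * (1 + ω) ≤ u (n + 1) + ω * u n := by
  set f : ℕ → ℝ := fun j => ω ^ j * (u (n + j + 1) + ω * u (n + j) - C * (1 + ω)) with hf
  have hanti : Antitone f := antitone_nat_of_succ_le fun j => by
    have hstep := goldenMean_mul_succ_add hrec (n + j)
    have hCω : ω * (C * (1 + ω)) = C := by linear_combination C * goldenMean_sq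
    have hCj := mul_le_mul_of_nonneg_left (hC (n + j) (by omega)) goldenMean_pos.le
    calc f (j + 1) =
          ω ^ j * (ω * (u (n + j + 2) + ω * u (n + j + 1)) - ω * (C * (1 + ω))) := by
          simp only [hf, ← add_assoc]
          ring
      _ ≤ f j := mul_le_mul_of_nonneg_left (by rw [hstep, hCω]; linarith)
          (goldenMean_pow_pos j).le
  have hlim : Tendsto f atTop (𝓝 0) := by
    have h0 := (tendsto_add_atTop_iff_nat n).2 hu
    have h1 := (tendsto_add_atTop_iff_nat (n + 1)).2 hu
    have h := ((h1.const_mul (ω ^ (n + 1))⁻¹).add (h0.const_mul (ω * (ω ^ n)⁻¹))).sub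
      (tendsto_goldenMean_pow.mul_const (C * (1 + ω)))
    simp only [mul_zero, zero_mul, add_zero, sub_zero] at h
    refine h.congr fun j => ?_
    have hω := goldenMean_pos
    simp only [hf]
    rw [add_comm n j, add_assoc j n 1]
    field_simp
    ring
  have h : 0 ≤ f 0 := hanti.le_of_tendsto hlim 0
  simpa [hf] using h

lemma eventually_lt_succ_add {a l : ℝ} (hc : Tendsto c atTop (𝓝 l)) (ha : a < l * (1 + ω)) :
    ∀ᶠ n in atTop, a < u (n + 1) + ω * u n := by
  have hω : 0 < 1 + ω := by linarith [goldenMean_pos]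
  obtain ⟨C, haC, hCl⟩ := exists_between ((div_lt_iff₀ hω).2 ha)
  filter_upwards [eventually_forall_ge_atTop.2 (hc.eventually_const_le hCl)] with n hn
  exact ((div_lt_iff₀ hω).1 haC).trans_le (mul_le_succ_add hrec hu hn)

lemma tendsto_of_tendsto_defect {l : ℝ} (hc : Tendsto c atTop (𝓝 l)) :
    Tendsto u atTop (𝓝 l) := by
  have hneg : ∀ n, -u (n + 2) = -u (n + 1) + -u n - -c n := fun n => by rw [hrec]; ring
  have hw : Tendsto (fun n => u (n + 1) + ω * u n) atTop (𝓝 (l * (1 + ω))) := by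
    refine tendsto_order.2 ⟨fun a ha => eventually_lt_succ_add hrec hu hc ha, fun a ha => ?_⟩
    filter_upwards [eventually_lt_succ_add (u := -u) (a := -a) (l := -l) hneg
      (by simpa using hu.neg) hc.neg (by linarith)] with n hn
    simp only [Pi.neg_apply] at hn
    linarith
  have herr : Tendsto (fun n => |u (n + 1) + ω * u n - l * (1 + ω)|) atTop (𝓝 0) := by
    simpa using (hw.sub_const (l * (1 + ω))).abs
  have hdiff : Tendsto (fun n => u n - l) atTop (𝓝 0) := by
    refine tendsto_zero_of_abs_succ_le goldenMean_pos.le goldenMean_lt_one herr fun n => ?_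
    calc |u (n + 1) - l| = |u (n + 1) + ω * u n - l * (1 + ω) - ω * (u n - l)| := by ring_nf
      _ ≤ |u (n + 1) + ω * u n - l * (1 + ω)| + |ω * (u n - l)| := abs_sub _ _
      _ = ω * |u n - l| + |u (n + 1) + ω * u n - l * (1 + ω)| := by
        rw [abs_mul, abs_of_pos goldenMean_pos, add_comm]
  simpa using hdiff.add_const l

end Subexponential

end Recurrence

/-! ### Estimates for the shift correction -/

lemma mul_le_sin_pi_mul {x : ℝ} (h0 : 0 ≤ x) (h1 : x ≤ 0.573) : 5 / 3 * x ≤ sin (π * x) := by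
  rcases le_total x (1 / 2) with h | h
  · linarith [two_mul_le_sin_pi_mul h0 h]
  · have hcos := one_sub_sq_div_two_le_sin_pi_mul x
    have hpi := mul_le_mul_of_nonneg_right pi_sq_le_ten (sq_nonneg (x - 1 / 2))
    rw [mul_pow] at hcos
    nlinarith [mul_nonneg (sub_nonneg.2 h) (sub_nonneg.2 h1)]

section Shift

variable {n k : ℕ} (hk : 1 ≤ k) (hkq : k < fib (n + 1))
include hk hkq

lemma shiftRatio_nonneg : 0 ≤ shiftRatio n k := by
  have hsin0 := sin_orbitPoint_pos hk hkq
  have hsin1 := sin_orbitPoint_add_pos hk hkq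
  have hsin2 := sin_goldenMean_pow_pos (n + 1).succ_ne_zero
  have hsin3 := sin_goldenMean_pow_pos (n + 2).succ_ne_zero
  unfold shiftRatio
  positivity

lemma shiftCorrection_nonneg : 0 ≤ shiftCorrection n k :=
  log_nonneg (le_add_of_nonneg_right (shiftRatio_nonneg hk hkq))

lemma shiftCorrection_le_shiftRatio : shiftCorrection n k ≤ shiftRatio n k := by
  have hratio := shiftRatio_nonneg hk hkq
  have h : shiftCorrection n k ≤ 1 + shiftRatio n k - 1 := log_le_sub_one_of_pos (by linarith)
  linarith

lemma shiftCorrection_fib_sub : shiftCorrection n (fib (n + 1) - k) = shiftCorrection n k := by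
  rw [shiftCorrection, shiftCorrection, shiftRatio, shiftRatio, orbitPoint_fib_sub hk hkq,
    sub_add_eq_add_sub, sub_add_cancel, sub_sub, sin_pi_mul_one_sub, sin_pi_mul_one_sub,
    add_comm (ω ^ (n + 1)), mul_comm (sin (π * orbitPoint n k))]

end Shift

lemma shiftDefect_nonneg (n : ℕ) : 0 ≤ shiftDefect n :=
  div_nonneg (sum_nonneg fun _ hk =>
    shiftCorrection_nonneg (mem_Ico.1 hk).1 (mem_Ico.1 hk).2) two_pos.le

lemma shiftRatio_le {n k : ℕ} {a b : ℝ} (ha : 0 < a) (hb : 0 < b)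
    (hsin : a ≤ sin (π * orbitPoint n k)) (hsin' : b ≤ sin (π * (orbitPoint n k + ω ^ (n + 1)))) :
    shiftRatio n k ≤ 10 * ω ^ (2 * n + 5) / (a * b) := by
  have hpos := goldenMean_pow_pos (n + 2)
  have hpos' := goldenMean_pow_pos (n + 3)
  have hpow := goldenMean_pow_pos (2 * n + 5)
  have hnum : sin (π * ω ^ (n + 2)) * sin (π * ω ^ (n + 3)) ≤ 10 * ω ^ (2 * n + 5) :=
    calc sin (π * ω ^ (n + 2)) * sin (π * ω ^ (n + 3))
        ≤ π * ω ^ (n + 2) * (π * ω ^ (n + 3)) :=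
          mul_le_mul (sin_pi_mul_le hpos.le) (sin_pi_mul_le hpos'.le)
            (sin_goldenMean_pow_pos (n + 2).succ_ne_zero).le (by positivity)
      _ = π ^ 2 * ω ^ (2 * n + 5) := by ring
      _ ≤ 10 * ω ^ (2 * n + 5) := mul_le_mul_of_nonneg_right pi_sq_le_ten hpow.le
  exact div_le_div₀ (by positivity) hnum (by positivity)
    (mul_le_mul hsin hsin' hb.le (ha.le.trans hsin))

lemma two_mul_orbitPoint_le {n k : ℕ} (hk : 1 ≤ k) (hkq : 2 * k ≤ fib (n + 1)) :
    2 * orbitPoint n k ≤ 1 - ω ^ (n + 1) := by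
  have h := monotone_orbitPoint n (show k ≤ fib (n + 1) - k by omega)
  rw [orbitPoint_fib_sub hk (by omega)] at h
  linarith

lemma shiftCorrection_le {n k : ℕ} (hn : 3 ≤ n) (hk : 1 ≤ k) (hkq : 2 * k ≤ fib (n + 1)) :
    shiftCorrection n k ≤ 3 * ω ^ 5 * (fibChain k * (fibChain k + ω))⁻¹ := by
  have hX := orbitPoint_pos n hk
  have hhalf := two_mul_orbitPoint_le hk hkq
  have hpow := goldenMean_pow_pos (n + 1)
  have hpow4 : ω ^ (n + 1) ≤ ω ^ 4 := goldenMean_pow_le_pow (by omega)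
  rw [goldenMean_pow_four] at hpow4
  have hlt := lt_goldenMean
  have hchain := one_le_fibChain hk
  calc shiftCorrection n k
      ≤ 10 * ω ^ (2 * n + 5) /
          (2 * orbitPoint n k * (5 / 3 * (orbitPoint n k + ω ^ (n + 1)))) :=
        (shiftCorrection_le_shiftRatio hk (by omega)).trans
          (shiftRatio_le (by positivity) (by positivity)
            (two_mul_le_sin_pi_mul hX.le (by linarith))
            (mul_le_sin_pi_mul (by positivity) (by linarith)))
    _ = 3 * ω ^ 5 * (fibChain k * (fibChain k + ω))⁻¹ := by
        have := goldenMean_pos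
        rw [orbitPoint, pow_succ ω n, ← mul_add]
        field_simp
        ring

lemma lt_fibChain (k : ℕ) : (1 + ω ^ 2) * k - ω < fibChain k := by
  have h := mul_lt_mul_of_pos_right (Nat.lt_floor_add_one (k * ω)) goldenMean_pos
  rw [fibChain]
  linarith

/-- The left-hand side is chosen so that its reciprocals telescope; `1.3` is large enough for a
good constant in `sum_inv_fibChain_le_sub` and small enough for this bound to hold for all `M`. -/
lemma mul_le_fibChain_mul (M : ℕ) :
    1.9 * (M + 1.3) * (M + 2.3) ≤ fibChain (M + 2) * (fibChain (M + 2) + ω) := by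
  have hM : (0 : ℝ) ≤ M := Nat.cast_nonneg M
  have hlt := lt_goldenMean
  have hgt := goldenMean_lt
  have hchain : 1.3817 * (M + 2) - 0.6181 ≤ fibChain (M + 2) := by
    have h := lt_fibChain (M + 2)
    push_cast at h
    rw [goldenMean_sq] at h
    nlinarith
  calc (1.9 * (M + 1.3) * (M + 2.3) : ℝ)
      ≤ (1.3817 * (M + 2) - 0.6181) * (1.3817 * (M + 2) - 0.6181 + 0.618) := by
        nlinarith [hM, sq_nonneg ((M : ℝ) - 3)]
    _ ≤ fibChain (M + 2) * (fibChain (M + 2) + ω) :=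
      mul_le_mul hchain (by linarith) (by linarith) (by linarith)

lemma sum_inv_fibChain_le_sub (M : ℕ) :
    ∑ k ∈ range (M + 1), (fibChain (k + 1) * (fibChain (k + 1) + ω))⁻¹ ≤
      1.03 - 10 / 19 / (M + 1.3) := by
  induction M with
  | zero =>
    have hchain := one_le_fibChain (le_refl 1)
    have h : (fibChain 1 * (fibChain 1 + ω))⁻¹ ≤ 1.618⁻¹ :=
      inv_anti₀ (by norm_num) (by nlinarith [lt_goldenMean])
    rw [zero_add, sum_range_one, Nat.cast_zero]
    norm_num at h ⊢
    linarith
  | succ M ih =>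
    calc ∑ k ∈ range (M + 1 + 1), (fibChain (k + 1) * (fibChain (k + 1) + ω))⁻¹
        ≤ 1.03 - 10 / 19 / (M + 1.3) + (1.9 * ((M : ℝ) + 1.3) * (M + 2.3))⁻¹ := by
          rw [sum_range_succ]
          exact add_le_add ih (inv_anti₀ (by positivity) (mul_le_fibChain_mul M))
      _ = 1.03 - 10 / 19 / ((M + 1 : ℕ) + 1.3) := by
          rw [Nat.cast_succ, show (M : ℝ) + 1 + 1.3 = M + 2.3 by ring]
          field_simp
          ring

lemma sum_inv_fibChain_le (M : ℕ) :
    ∑ k ∈ range M, (fibChain (k + 1) * (fibChain (k + 1) + ω))⁻¹ ≤ 1.03 := by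
  cases M with
  | zero => norm_num
  | succ M =>
    have hpos : 0 ≤ (10 / 19 : ℝ) / (M + 1.3) := by positivity
    linarith [sum_inv_fibChain_le_sub M]

/-! ### The limit of the recurrence defect -/

/-- The weight selecting one index out of each pair `k`, `q - k`, each counted half if they
coincide. It turns the symmetric sum in `shiftDefect` into one whose terms converge. -/
noncomputable def pairWeight (q k : ℕ) : ℝ :=
  if 2 * k < q then 1 else if 2 * k = q then 1 / 2 else 0

lemma pairWeight_nonneg (q k : ℕ) : 0 ≤ pairWeight q k := by
  unfold pairWeight
  split_ifs <;> norm_num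

lemma pairWeight_le_one (q k : ℕ) : pairWeight q k ≤ 1 := by
  unfold pairWeight
  split_ifs <;> norm_num

lemma pairWeight_of_lt {q k : ℕ} (h : 2 * k < q) : pairWeight q k = 1 := if_pos h

lemma pairWeight_of_gt {q k : ℕ} (h : q < 2 * k) : pairWeight q k = 0 := by
  rw [pairWeight, if_neg (by omega), if_neg (by omega)]

lemma pairWeight_add_pairWeight_sub {q k : ℕ} (hk : k ≤ q) :
    pairWeight q k + pairWeight q (q - k) = 1 := by
  unfold pairWeight
  split_ifs <;> first | omega | norm_num

lemma sum_Ico_eq_two_mul_sum_pairWeight {q : ℕ} {f : ℕ → ℝ}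
    (hf : ∀ k, 1 ≤ k → k < q → f (q - k) = f k) :
    ∑ k ∈ Ico 1 q, f k = 2 * ∑ k ∈ Ico 1 q, pairWeight q k * f k := by
  have hreflect := sum_Ico_reflect (fun k => pairWeight q k * f k) 1 q.le_succ
  rw [Nat.add_sub_cancel_left, Nat.add_sub_cancel] at hreflect
  have hsplit : ∑ k ∈ Ico 1 q, f k =
      ∑ k ∈ Ico 1 q, (pairWeight q k * f k + pairWeight q (q - k) * f (q - k)) := by
    refine sum_congr rfl fun k hk => ?_
    rw [mem_Ico] at hk
    rw [hf k hk.1 hk.2, ← add_mul, pairWeight_add_pairWeight_sub hk.2.le, one_mul]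
  rw [hsplit, sum_add_distrib, hreflect, two_mul]

lemma shiftDefect_eq_sum (n : ℕ) :
    shiftDefect n =
      ∑ k ∈ Ico 1 (fib (n + 1)), pairWeight (fib (n + 1)) k * shiftCorrection n k := by
  rw [shiftDefect, sum_Ico_eq_two_mul_sum_pairWeight fun _ => shiftCorrection_fib_sub]
  ring

lemma shiftDefect_eq_tsum (n : ℕ) :
    shiftDefect n =
      ∑' k, pairWeight (fib (n + 1)) (k + 1) * shiftCorrection n (k + 1) := by
  have hpos := fib_succ_pos n
  rw [shiftDefect_eq_sum, sum_Ico_eq_sum_range,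
    tsum_eq_sum (s := range (fib (n + 1) - 1)) fun k hk => ?_]
  · simp only [add_comm 1]
  · rw [mem_range] at hk
    rw [pairWeight_of_gt (by omega), zero_mul]

lemma pairWeight_mul_shiftCorrection_nonneg {n k : ℕ} (hk : 1 ≤ k) :
    0 ≤ pairWeight (fib (n + 1)) k * shiftCorrection n k := by
  rcases lt_or_ge k (fib (n + 1)) with h | h
  · exact mul_nonneg (pairWeight_nonneg _ _) (shiftCorrection_nonneg hk h)
  · rw [pairWeight_of_gt (by omega), zero_mul]

lemma pairWeight_mul_shiftCorrection_le {n k : ℕ} (hn : 3 ≤ n) (hk : 1 ≤ k) :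
    pairWeight (fib (n + 1)) k * shiftCorrection n k ≤
      3 * ω ^ 5 * (fibChain k * (fibChain k + ω))⁻¹ := by
  rcases le_or_gt (2 * k) (fib (n + 1)) with h | h
  · exact (mul_le_of_le_one_left (shiftCorrection_nonneg hk (by omega))
      (pairWeight_le_one _ _)).trans (shiftCorrection_le hn hk h)
  · have hω := goldenMean_pos
    have hchain := one_le_fibChain hk
    rw [pairWeight_of_gt h, zero_mul]
    positivity

lemma tendsto_sin_goldenMean_pow_mul_div (a : ℝ) :
    Tendsto (fun n : ℕ => sin (π * (ω ^ n * a)) / ω ^ n) atTop (𝓝 (π * a)) :=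
  (tendsto_sin_pi_mul_div a).comp (tendsto_nhdsWithin_iff.2
    ⟨tendsto_goldenMean_pow, .of_forall fun n => (goldenMean_pow_pos n).ne'⟩)

lemma tendsto_logChord_goldenMean_pow_sub :
    Tendsto (fun n => logChord (ω ^ (n + 1)) - logChord (ω ^ (n + 3))) atTop
      (𝓝 (log (π * ω / (π * ω ^ 3)))) := by
  have hω := goldenMean_pos
  have h := (tendsto_sin_goldenMean_pow_mul_div ω).div
    (tendsto_sin_goldenMean_pow_mul_div (ω ^ 3)) (by positivity)
  refine (h.log (by positivity)).congr fun n => ?_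
  have hsin1 := sin_goldenMean_pow_pos n.succ_ne_zero
  have hsin3 := sin_goldenMean_pow_pos (n + 2).succ_ne_zero
  rw [logChord, logChord, ← log_div (by positivity) (by positivity), Pi.div_apply, ← pow_succ,
    ← pow_add, div_div_div_cancel_right₀ (by positivity), mul_div_mul_left _ _ two_ne_zero]

lemma tendsto_shiftRatio {k : ℕ} (hk : 1 ≤ k) :
    Tendsto (fun n => shiftRatio n k) atTop
      (𝓝 (π * ω ^ 2 * (π * ω ^ 3) / (π * fibChain k * (π * (fibChain k + ω))))) := by
  have hω := goldenMean_pos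
  have hchain := one_le_fibChain hk
  refine (((tendsto_sin_goldenMean_pow_mul_div (ω ^ 2)).mul
    (tendsto_sin_goldenMean_pow_mul_div (ω ^ 3))).div
    ((tendsto_sin_goldenMean_pow_mul_div (fibChain k)).mul
      (tendsto_sin_goldenMean_pow_mul_div (fibChain k + ω))) (by positivity)).congr fun n => ?_
  rw [Pi.div_apply, shiftRatio, orbitPoint, pow_succ ω n, ← mul_add, ← pow_add, ← pow_add,
    div_mul_div_comm, div_mul_div_comm, div_div_div_cancel_right₀ (by positivity)]

lemma exists_tendsto_shiftCorrection {k : ℕ} (hk : 1 ≤ k) :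
    ∃ l, Tendsto (fun n => shiftCorrection n k) atTop (𝓝 l) := by
  have hω := goldenMean_pos
  have hchain := one_le_fibChain hk
  exact ⟨_, ((tendsto_shiftRatio hk).const_add 1).log (by positivity)⟩

lemma tendsto_fib_succ : Tendsto (fun n => fib (n + 1)) atTop atTop :=
  tendsto_atTop_mono (fun n => Nat.succ_le_succ_iff.1 (Nat.le_fib_add_one (n + 1))) tendsto_id

lemma exists_tendsto_shiftDefect : ∃ l, Tendsto shiftDefect atTop (𝓝 l) := by
  choose l hl using fun k : ℕ => exists_tendsto_shiftCorrection k.succ_pos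
  have hsum := (summable_of_sum_range_le (fun k => by
    have hω := goldenMean_pos
    have hchain := one_le_fibChain k.succ_pos
    positivity) sum_inv_fibChain_le).mul_left (3 * ω ^ 5)
  refine ⟨∑' k, l k, ?_⟩
  simp only [funext shiftDefect_eq_tsum]
  refine tendsto_tsum_of_dominated_convergence hsum (fun k => ?_) ?_
  · refine (hl k).congr' ?_
    filter_upwards [tendsto_fib_succ.eventually_gt_atTop (2 * (k + 1))] with n hn
    rw [pairWeight_of_lt hn, one_mul]
  · filter_upwards [eventually_ge_atTop 3] with n hn k
    rw [norm_of_nonneg (pairWeight_mul_shiftCorrection_nonneg k.succ_pos)]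
    exact pairWeight_mul_shiftCorrection_le hn k.succ_pos

lemma exists_tendsto_recurrenceDefect : ∃ l, Tendsto recurrenceDefect atTop (𝓝 l) :=
  let ⟨_, hl⟩ := exists_tendsto_shiftDefect
  ⟨_, tendsto_logChord_goldenMean_pow_sub.sub hl⟩

/-! ### Positivity and monotonicity -/

lemma shiftDefect_le {n : ℕ} (hn : 3 ≤ n) : shiftDefect n ≤ 0.28 := by
  have hpow := goldenMean_pow_pos 5
  calc shiftDefect n
      ≤ ∑ k ∈ range (fib (n + 1) - 1),
          3 * ω ^ 5 * (fibChain (k + 1) * (fibChain (k + 1) + ω))⁻¹ := by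
        rw [shiftDefect_eq_sum, sum_Ico_eq_sum_range]
        refine sum_le_sum fun k _ => ?_
        rw [add_comm 1 k]
        exact pairWeight_mul_shiftCorrection_le hn k.succ_pos
    _ ≤ 3 * ω ^ 5 * 1.03 := by
        rw [← mul_sum]
        exact mul_le_mul_of_nonneg_left (sum_inv_fibChain_le _) (by positivity)
    _ ≤ 0.28 := by
        rw [goldenMean_pow_five]
        linarith [goldenMean_lt]

lemma shiftDefect_zero : shiftDefect 0 = 0 := by simp [shiftDefect]

lemma shiftDefect_one : shiftDefect 1 = 0 := by simp [shiftDefect]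

lemma fibChain_one : fibChain 1 = 1 := by
  have h : ⌊ω⌋₊ = 0 := Nat.floor_eq_zero.2 goldenMean_lt_one
  simp [fibChain, h]

lemma shiftDefect_two_le : shiftDefect 2 ≤ 0.12 := by
  have hpos := goldenMean_pow_pos 2
  have hfib : fib 3 = 2 := rfl
  have hpoint : orbitPoint 2 1 = ω ^ 2 := by rw [orbitPoint, fibChain_one, mul_one]
  have hsin : 2 * ω ^ 2 ≤ sin (π * ω ^ 2) :=
    two_mul_le_sin_pi_mul hpos.le (by linarith [goldenMean_sq, lt_goldenMean])
  have hsin' : 2 * ω ^ 2 ≤ sin (π * (ω ^ 2 + ω ^ 3)) := by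
    have hsum : ω ^ 2 + ω ^ 3 = 1 - ω ^ 2 := by linarith [goldenMean_sq, goldenMean_cube]
    rwa [hsum, sin_pi_mul_one_sub]
  calc shiftDefect 2 = shiftCorrection 2 1 / 2 := by simp [shiftDefect, hfib]
    _ ≤ 10 * ω ^ (2 * 2 + 5) / (2 * ω ^ 2 * (2 * ω ^ 2)) / 2 := by
        refine div_le_div_of_nonneg_right ?_ two_pos.le
        refine (shiftCorrection_le_shiftRatio le_rfl one_lt_two).trans ?_
        refine shiftRatio_le (by positivity) (by positivity) ?_ ?_ <;> rwa [hpoint]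
    _ = 5 / 4 * ω ^ 5 := by
        have := goldenMean_pos
        field_simp
        ring
    _ ≤ 0.12 := by
        rw [goldenMean_pow_five]
        linarith [goldenMean_lt]

lemma logChord_goldenMean_sq : logChord (ω ^ 2) = logChord ω := by
  rw [goldenMean_sq, logChord_one_sub]

lemma fibLogSudler_zero : fibLogSudler 0 = logChord ω := by simp [fibLogSudler, logSudler]

lemma fibLogSudler_one : fibLogSudler 1 = logChord ω := by simp [fibLogSudler, logSudler]

lemma fibLogSudler_two : fibLogSudler 2 = logChord ω + logChord (ω ^ 3) := by
  rw [fibLogSudler_add_two, recurrenceDefect, shiftDefect_zero, fibLogSudler_zero,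
    fibLogSudler_one]
  ring_nf

lemma fibLogSudler_three : fibLogSudler 3 = fibLogSudler 2 + logChord (ω ^ 4) := by
  rw [fibLogSudler_add_two, recurrenceDefect, shiftDefect_one, fibLogSudler_one,
    logChord_goldenMean_sq]
  ring

lemma neg_log_goldenMean_le_logChord : -log ω ≤ logChord ω := by
  have hlt := lt_goldenMean
  have hgt := goldenMean_lt
  have hinv : ω⁻¹ = 1 + ω := inv_eq_of_mul_eq_one_right (by linear_combination goldenMean_sq)
  have hsq : (ω - 1 / 2) ^ 2 ≤ 0.014 := by nlinarith
  have hpi := mul_le_mul_of_nonneg_right pi_sq_le_ten (sq_nonneg (ω - 1 / 2))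
  have hsin := one_sub_sq_div_two_le_sin_pi_mul ω
  rw [mul_pow] at hsin
  rw [← log_inv, hinv]
  exact log_le_log (by linarith) (by linarith)

lemma logChord_goldenMean_cube_nonneg : 0 ≤ logChord (ω ^ 3) := by
  have hcube := goldenMean_cube
  have hpi := mul_lt_mul_of_pos_right pi_gt_d2 (goldenMean_pow_pos 3)
  have hlt := lt_goldenMean
  have hgt := goldenMean_lt
  have hlog : 1 - (1.48 : ℝ)⁻¹ ≤ log (2 * (π * ω ^ 3)) :=
    (one_sub_inv_le_log_of_pos (by norm_num)).trans (log_le_log (by norm_num) (by linarith))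
  have h := log_two_pi_mul_add_le_logChord (b := 0.9) (goldenMean_pow_pos 3) (by norm_num)
    (by rw [hcube]; nlinarith)
  norm_num at h hlog
  linarith

lemma fibLogSudler_two_le : fibLogSudler 2 ≤ 1.18 := by
  have hpow := goldenMean_pow_pos 3
  have hlt : ω ^ 3 < 0.23608 := by linarith [goldenMean_cube, goldenMean_lt]
  have hpi := mul_lt_mul'' pi_lt_d4 hlt pi_pos.le hpow.le
  rw [fibLogSudler_two]
  linarith [logChord_le_log_two goldenMean_pos goldenMean_lt_one, log_two_lt_d9,
    logChord_le_two_pi_mul_sub_one hpow (by linarith)]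

lemma logChord_goldenMean_pow_four_mem : logChord (ω ^ 4) ∈ Set.Icc (-0.15) (-0.08) := by
  have hpow := goldenMean_pow_pos 4
  have hlt : ω ^ 4 < 0.146 := by linarith [goldenMean_pow_four, lt_goldenMean]
  have hgt : 0.1458 < ω ^ 4 := by linarith [goldenMean_pow_four, goldenMean_lt]
  have hpi := mul_lt_mul'' pi_lt_d4 hlt pi_pos.le hpow.le
  have hpi' := mul_lt_mul'' pi_gt_d2 hgt (by norm_num) (by norm_num)
  have hlog : 1 - (0.915 : ℝ)⁻¹ ≤ log (2 * (π * ω ^ 4)) :=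
    (one_sub_inv_le_log_of_pos (by norm_num)).trans (log_le_log (by norm_num) (by linarith))
  have h := log_two_pi_mul_add_le_logChord (b := 0.96) hpow (by norm_num) (by nlinarith)
  constructor
  · norm_num at h hlog ⊢
    linarith
  · linarith [logChord_le_two_pi_mul_sub_one hpow (by linarith)]

lemma le_logChord_goldenMean_pow_sub {n : ℕ} {b : ℝ} (hb : 0 < b)
    (hbn : b ≤ 1 - 5 / 3 * (ω ^ (n + 1)) ^ 2) :
    -2 * log ω + (1 - b⁻¹) ≤ logChord (ω ^ (n + 1)) - logChord (ω ^ (n + 3)) := by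
  have hpos := goldenMean_pow_pos (n + 1)
  have hlow := log_two_pi_mul_add_le_logChord hpos hb hbn
  have hupp := logChord_le_log_two_pi_mul (goldenMean_pow_pos (n + 3))
    (goldenMean_pow_lt_one (n + 2).succ_ne_zero)
  have hlog : log (2 * (π * ω ^ (n + 3))) = log (2 * (π * ω ^ (n + 1))) + 2 * log ω := by
    have hsq := goldenMean_pow_pos 2
    rw [show 2 * (π * ω ^ (n + 3)) = 2 * (π * ω ^ (n + 1)) * ω ^ 2 by ring,
      log_mul (by positivity) hsq.ne', log_pow, Nat.cast_ofNat]
  linarith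

lemma le_recurrenceDefect {n : ℕ} (hn : 2 ≤ n) : -2 * log ω - 0.32 ≤ recurrenceDefect n := by
  rw [recurrenceDefect]
  have hlt := lt_goldenMean
  have hgt := goldenMean_lt
  rcases hn.eq_or_lt with rfl | hn
  · have h := le_logChord_goldenMean_pow_sub (n := 2) (b := 0.9) (by norm_num)
      (by rw [goldenMean_cube]; nlinarith)
    norm_num at h ⊢
    linarith [shiftDefect_two_le]
  · have hpow : ω ^ (n + 1) ≤ 0.146 :=
      (goldenMean_pow_le_pow (show 4 ≤ n + 1 by omega)).trans
        (by rw [goldenMean_pow_four]; linarith)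
    have h := le_logChord_goldenMean_pow_sub (n := n) (b := 0.964) (by norm_num)
      (by nlinarith [goldenMean_pow_pos (n + 1)])
    norm_num at h ⊢
    linarith [shiftDefect_le hn]

lemma logChord_goldenMean_pow_add_log_le {m : ℕ} (hm : m ≠ 0) (k : ℕ) :
    logChord (ω ^ m) + k * log ω ≤ logChord (ω ^ (m + k)) := by
  have hdiv : ω ^ (m + k) / ω ^ m = ω ^ k := by
    rw [pow_add, mul_div_cancel_left₀ _ (goldenMean_pow_pos m).ne']
  rw [← log_pow, ← hdiv]
  exact logChord_add_log_div_le (goldenMean_pow_pos _) (goldenMean_pow_le_pow (m.le_add_right k))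
    (goldenMean_pow_lt_one hm)

lemma recurrenceDefect_le (n : ℕ) : recurrenceDefect n ≤ -2 * log ω := by
  have h := logChord_goldenMean_pow_add_log_le n.succ_ne_zero 2
  rw [Nat.cast_ofNat] at h
  rw [recurrenceDefect]
  linarith [shiftDefect_nonneg n]

lemma fibLogSudler_succ_sub_le {n : ℕ} (hn : 2 ≤ n) :
    fibLogSudler (n + 1) - (1 + ω) * fibLogSudler n ≤ 2 * log ω * ω + 0.32 * (1 + ω) := by
  have hlt := lt_goldenMean
  have hgt := goldenMean_lt
  have hlog := mul_le_mul_of_nonneg_right le_log_goldenMean goldenMean_pos.le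
  obtain ⟨hchord, hchord'⟩ := logChord_goldenMean_pow_four_mem
  have hupp := mul_le_mul_of_nonneg_left fibLogSudler_two_le goldenMean_pos.le
  have hlow : 0.4 ≤ fibLogSudler 2 := by
    rw [fibLogSudler_two]
    linarith [neg_log_goldenMean_le_logChord, logChord_goldenMean_cube_nonneg, log_goldenMean_le]
  have hthree : fibLogSudler 3 - (1 + ω) * fibLogSudler 2 =
      -(ω * fibLogSudler 2 - logChord (ω ^ 4)) := by
    rw [fibLogSudler_three]
    ring
  have hfour : fibLogSudler 4 - (1 + ω) * fibLogSudler 3 =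
      ω * (ω * fibLogSudler 2 - logChord (ω ^ 4)) - recurrenceDefect 2 := by
    rw [fibLogSudler_add_two 2, fibLogSudler_three]
    linear_combination -fibLogSudler 2 * goldenMean_sq
  refine succ_sub_le_of_le fibLogSudler_add_two
    (fun j hj => ⟨le_recurrenceDefect hj, recurrenceDefect_le j⟩) ?_ ?_ ?_ n hn
  · exact le_of_eq (by linear_combination -(2 * log ω + 0.32) * goldenMean_sq)
  · rw [hthree]
    nlinarith
  · have hdefect := le_recurrenceDefect le_rfl
    have hstep : ω * (ω * fibLogSudler 2 - logChord (ω ^ 4)) ≤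
        ω * (-2 * log ω * ω + 0.32) :=
      mul_le_mul_of_nonneg_left (by nlinarith [log_goldenMean_le]) goldenMean_pos.le
    rw [hfour]
    linear_combination hstep + hdefect - 2 * log ω * goldenMean_sq

lemma neg_log_goldenMean_le_fibLogSudler (n : ℕ) : -log ω ≤ fibLogSudler n := by
  match n with
  | 0 => exact fibLogSudler_zero ▸ neg_log_goldenMean_le_logChord
  | 1 => exact fibLogSudler_one ▸ neg_log_goldenMean_le_logChord
  | n + 2 =>
    have hlow := mul_le_succ_add fibLogSudler_add_two tendsto_goldenMean_pow_mul_fibLogSudler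
      (n := n + 2) fun j hj => le_recurrenceDefect (show 2 ≤ j by omega)
    have hupp := fibLogSudler_succ_sub_le (n := n + 2) (by omega)
    have hω : 0 < 1 + 2 * ω := by linarith [goldenMean_pos]
    have hlog := mul_le_mul_of_nonneg_left log_goldenMean_le hω.le
    exact le_of_mul_le_mul_left (by linarith [lt_goldenMean]) hω

lemma monotone_fibPredLogSudler : Monotone fibPredLogSudler := by
  refine monotone_nat_of_le_succ fun n => ?_
  cases n with
  | zero => simp [fibPredLogSudler]
  | succ n =>
    have hratio := logChord_goldenMean_pow_add_log_le n.succ_ne_zero 1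
    have hrec := fibLogSudler_add_two n
    rw [fibLogSudler_eq_add (n + 2), fibLogSudler_eq_add (n + 1), recurrenceDefect] at hrec
    rw [Nat.cast_one, one_mul] at hratio
    linarith [neg_log_goldenMean_le_fibLogSudler n, shiftDefect_nonneg n]

/-! ### The limit inferior -/

lemma liminf_eq_of_tendsto_comp {u : ℕ → ℝ} {q : ℕ → ℕ} {L : ℝ} (hq : Tendsto q atTop atTop)
    (hlim : Tendsto (fun n => u (q n)) atTop (𝓝 L)) (hlow : ∀ a < L, ∀ᶠ N in atTop, a ≤ u N) :
    liminf u atTop = L := by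
  have hfreq : ∀ a > L, ∃ᶠ N in atTop, u N ≤ a := fun a ha =>
    hq.frequently (hlim.eventually_le_const ha).frequently
  refine le_antisymm (le_of_forall_gt_imp_ge_of_dense fun a ha => ?_)
    (le_of_forall_lt_imp_le_of_dense fun a ha => ?_)
  · exact liminf_le_of_frequently_le (hfreq a ha)
      (isBoundedUnder_of_eventually_ge (hlow (L - 1) (sub_one_lt L)))
  · exact le_liminf_of_le (IsCoboundedUnder.of_frequently_le (hfreq (L + 1) (lt_add_one L)))
      (hlow a ha)

lemma eventually_le_logSudler {a l : ℝ} (hl : Tendsto fibLogSudler atTop (𝓝 l)) (ha : a < l) :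
    ∀ᶠ N in atTop, a ≤ logSudler ω N 0 := by
  obtain ⟨M, hM⟩ := (hl.eventually_const_le ha).exists_forall_of_atTop
  filter_upwards [eventually_ge_atTop (fib (M + 1))] with N hN
  have hgreatest : M + 1 ≤ N.greatestFib := Nat.le_greatestFib.2 hN
  obtain ⟨m, hm⟩ := Nat.exists_eq_add_of_le' (Nat.one_le_of_lt hgreatest)
  refine (hM m (by omega)).trans (fibLogSudler_le_logSudler monotone_fibPredLogSudler ?_ ?_)
  · exact hm ▸ N.fib_greatestFib_le
  · simpa only [hm] using N.lt_fib_greatestFib_add_one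

lemma exists_tendsto_fibLogSudler : ∃ l > 0, Tendsto fibLogSudler atTop (𝓝 l) := by
  obtain ⟨l, hl⟩ := exists_tendsto_recurrenceDefect
  have hlim := tendsto_of_tendsto_defect fibLogSudler_add_two
    tendsto_goldenMean_pow_mul_fibLogSudler hl
  have hlow := ge_of_tendsto' hlim neg_log_goldenMean_le_fibLogSudler
  exact ⟨l, by linarith [log_goldenMean_le], hlim⟩

lemma fibq_eq_fib_succ (n : ℕ) : fibq n = fib (n + 1) := by
  induction n using Nat.twoStepInduction with
  | zero | one => rfl
  | more n ih0 ih1 => rw [fibq, ih0, ih1, fib_add_two (n := n + 1), add_comm]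

end GoldenSudler

open GoldenSudler

/-- for the golden mean `α = (√5 - 1)/2`,
`Sℓ(n) = Σ_{j=1}^n log(2 - 2cos(2πjα))`, and `q_n` the Fibonacci denominators of the
convergents of `α`, the sequence `Sℓ(q_n)` converges to a limit `L`, `L > 0`, and
`liminf_{n→∞} Sℓ(n) = L`. -/
theorem stmt13 (α : ℝ) (hα : α = (Real.sqrt 5 - 1) / 2)
    (Sl : ℕ → ℝ)
    (hSl : ∀ n : ℕ, Sl n = ∑ j ∈ Finset.Icc 1 n,
      Real.log (2 - 2 * Real.cos (2 * Real.pi * j * α))) :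
    ∃ L : ℝ, Tendsto (fun n : ℕ => Sl (fibq n)) atTop (nhds L) ∧ 0 < L ∧
      liminf Sl atTop = L := by
  obtain rfl : α = goldenMean := hα
  obtain ⟨l, hl0, hl⟩ := exists_tendsto_fibLogSudler
  have hSudler (n : ℕ) : Sl n = 2 * logSudler goldenMean n 0 :=
    (hSl n).trans (sum_log_two_sub_two_mul_cos goldenMean n)
  have hlim : Tendsto (fun n => Sl (fibq n)) atTop (nhds (2 * l)) := by
    refine (hl.const_mul 2).congr fun n => ?_
    rw [hSudler, fibq_eq_fib_succ, fibLogSudler]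
  have hlow : ∀ a < 2 * l, ∀ᶠ N in atTop, a ≤ Sl N := fun a ha => by
    filter_upwards [eventually_le_logSudler (a := a / 2) hl (by linarith)] with N hN
    linarith [hSudler N]
  have hfibq : Tendsto fibq atTop atTop := tendsto_fib_succ.congr fun n =>
    (fibq_eq_fib_succ n).symm
  exact ⟨2 * l, hlim, by linarith, liminf_eq_of_tendsto_comp hfibq hlim hlow⟩
end
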